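/- arXiv:2111.02615 — 5 statements merged into one kernel-verified Lean document; each statement's English description precedes it below -/
import Mathlib

section
/- Let n ≥ 3 and r ≥ 1, and let Γ be the simple graph on (ZMod (r·n)) ⊕ Unit in which inl k and inl k' are adjacent if and only if k' = k + r or k = k' + r, and inl k is adjacent to the unique vertex inr () for every k ∈ ZMod (r·n). Then Γ is connected, the map g with g(inl k) = inl (k+1) and g(inr ()) = inr () is an automorphism of Γ of order r·n, and the cyclic group generated by g has exactly two orbits on the vertex set and acts freely on the edge set of Γ with exactly two orbits, each of size r·n. -/
/-- The graph `r·C_n + K_{rn,1}` on `ZMod (r*n) ⊕ Unit`: `inl k` is adjacent to `inl k'`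
iff `k' = k + r` or `k = k' + r`, and `inl k` is adjacent to `inr ()` for every `k`. -/
def starCycles (r n : ℕ) : SimpleGraph (ZMod (r * n) ⊕ Unit) :=
  SimpleGraph.fromRel (fun v w =>
    (∃ k : ZMod (r * n), v = Sum.inl k ∧ w = Sum.inl (k + (r : ZMod (r * n)))) ∨
    (∃ k : ZMod (r * n), v = Sum.inl k ∧ w = Sum.inr ()))

/-!
On the spokes the rotations act as a group acts on itself by translation, hence freely. On the rim
edges `{a, a + s}` freeness could only fail for a rotation exchanging the two ends of an edge, which
forces `2s = 0`; for `s = r` in `ℤ/rn` this means `n ∣ 2`. The same argument works for the cone over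
the Cayley graph of any cyclic group with connection set `{s, -s}`.
-/

/-- The cone over the Cayley graph of `A` with connection set `{s, -s}`: every `inl a` is joined to
`inl (a + s)` (no loop is added when `s = 0`) and to the apex `inr ()`. -/
def cayleyCone {A : Type*} [AddCommGroup A] (s : A) : SimpleGraph (A ⊕ Unit) :=
  SimpleGraph.fromRel (fun v w =>
    (∃ a : A, v = Sum.inl a ∧ w = Sum.inl (a + s)) ∨
    (∃ a : A, v = Sum.inl a ∧ w = Sum.inr ()))

namespace cayleyCone

variable {A : Type*} [AddCommGroup A] {s x a b : A} {e : Sym2 (A ⊕ Unit)}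

theorem adj_inl_inl :
    (cayleyCone s).Adj (Sum.inl a) (Sum.inl b) ↔ a ≠ b ∧ (b = a + s ∨ a = b + s) := by
  simp [cayleyCone]

theorem adj_inl_inr (s a : A) : (cayleyCone s).Adj (Sum.inl a) (Sum.inr ()) := by
  simp [cayleyCone]

theorem connected (s : A) : (cayleyCone s).Connected := by
  rw [SimpleGraph.connected_iff_exists_forall_reachable]
  refine ⟨Sum.inr (), ?_⟩
  rintro (a | _)
  · exact (adj_inl_inr s a).symm.reachable
  · exact SimpleGraph.Reachable.rfl

/-- The edge of the Cayley graph from `a` to `a + s` (a loop when `s = 0`). -/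
def rimEdge (s a : A) : Sym2 (A ⊕ Unit) := s(Sum.inl a, Sum.inl (a + s))

/-- The edge joining `a` to the apex of the cone. -/
def spoke (a : A) : Sym2 (A ⊕ Unit) := s(Sum.inl a, Sum.inr ())

theorem rimEdge_ne_spoke (s a b : A) : rimEdge s a ≠ spoke b := by
  simp [rimEdge, spoke]

theorem mem_edgeSet_iff (hs : s ≠ 0) :
    e ∈ (cayleyCone s).edgeSet ↔ (∃ a, rimEdge s a = e) ∨ ∃ a, spoke a = e := by
  constructor
  · induction e with | _ v w
    rw [SimpleGraph.mem_edgeSet]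
    intro h
    rcases v with a | _ <;> rcases w with b | _
    · obtain ⟨-, rfl | rfl⟩ := adj_inl_inl.mp h
      · exact .inl ⟨a, rfl⟩
      · exact .inl ⟨b, Sym2.eq_swap⟩
    · exact .inr ⟨a, rfl⟩
    · exact .inr ⟨b, Sym2.eq_swap⟩
    · exact absurd h (SimpleGraph.irrefl _)
  · rintro (⟨a, rfl⟩ | ⟨a, rfl⟩)
    · exact adj_inl_inl.mpr ⟨by simpa using hs, .inl rfl⟩
    · exact adj_inl_inr s a

theorem spoke_injective {A : Type*} : Function.Injective (spoke (A := A)) := by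
  intro a b h
  simpa [spoke] using h

theorem rimEdge_injective (hs : 2 • s ≠ 0) : Function.Injective (rimEdge s) := by
  intro a b h
  simp only [rimEdge, Sym2.eq_iff, Sum.inl.injEq] at h
  obtain ⟨hab, -⟩ | ⟨hab, hba⟩ := h
  · exact hab
  · have two_nsmul_eq_zero : 2 • s = 0 := by
      rw [hab] at hba
      simpa [two_nsmul, add_assoc] using hba
    exact absurd two_nsmul_eq_zero hs

/-- The action of `A` on the cone by translations of the base, fixing the apex. -/
def translation (s : A) : Multiplicative A →* (cayleyCone s ≃g cayleyCone s) where
  toFun x :=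
    { toEquiv := (Equiv.addRight x.toAdd).sumCongr (Equiv.refl Unit)
      map_rel_iff' := by
        rintro (a | _) (b | _)
        · simp [adj_inl_inl, add_right_comm _ x.toAdd]
        · exact iff_of_true (adj_inl_inr s _) (adj_inl_inr s _)
        · exact iff_of_true (adj_inl_inr s _).symm (adj_inl_inr s _).symm
        · exact iff_of_false (SimpleGraph.irrefl _) (SimpleGraph.irrefl _) }
  map_one' := by ext (a | _) <;> simp
  map_mul' x y := by ext (a | _) <;> simp [add_assoc, add_comm x.toAdd]

@[simp]
theorem translation_inl (s a : A) (x : Multiplicative A) :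
    translation s x (Sum.inl a) = Sum.inl (a + x.toAdd) := rfl

theorem translation_injective (s : A) : Function.Injective (translation s) := by
  intro x y h
  simpa using DFunLike.congr_fun h (Sum.inl 0)

@[simp]
theorem map_translation_rimEdge (s a : A) (x : Multiplicative A) :
    Sym2.map (translation s x) (rimEdge s a) = rimEdge s (a + x.toAdd) := by
  simp [rimEdge, add_right_comm]

@[simp]
theorem map_translation_spoke (s a : A) (x : Multiplicative A) :
    Sym2.map (translation s x) (spoke a) = spoke (a + x.toAdd) := rfl

theorem map_translation_injective (hs : 2 • s ≠ 0) (he : e ∈ (cayleyCone s).edgeSet) :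
    Function.Injective fun x => Sym2.map (translation s x) e := by
  have hs₀ : s ≠ 0 := right_ne_zero_of_smul hs
  intro x y hxy
  obtain ⟨a, rfl⟩ | ⟨a, rfl⟩ := (mem_edgeSet_iff hs₀).mp he
  · simp only [map_translation_rimEdge] at hxy
    simpa using rimEdge_injective hs hxy
  · simp only [map_translation_spoke] at hxy
    simpa using spoke_injective hxy

theorem eq_one_of_map_translation_eq (hs : 2 • s ≠ 0) (he : e ∈ (cayleyCone s).edgeSet)
    {x : Multiplicative A} (hx : Sym2.map (translation s x) e = e) : x = 1 :=
  map_translation_injective hs he (by simpa using hx)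

theorem orderOf_translation (hx : ∀ a : A, a ∈ AddSubgroup.zmultiples x) (s : A) :
    orderOf (translation s (.ofAdd x)) = Nat.card A := by
  rw [orderOf_injective _ (translation_injective s), orderOf_ofAdd_eq_addOrderOf,
    addOrderOf_eq_card_of_forall_mem_zmultiples hx]

theorem exists_translation_zpow_iff (hx : ∀ a : A, a ∈ AddSubgroup.zmultiples x)
    (p : (cayleyCone s ≃g cayleyCone s) → Prop) :
    (∃ k : ℤ, p (translation s (.ofAdd x) ^ k)) ↔ ∃ y, p (translation s y) := by
  constructor
  · rintro ⟨k, hk⟩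
    exact ⟨.ofAdd x ^ k, by rwa [map_zpow]⟩
  · rintro ⟨y, hy⟩
    obtain ⟨k, hk⟩ := AddSubgroup.mem_zmultiples_iff.mp (hx y.toAdd)
    exact ⟨k, by rwa [← map_zpow, ← ofAdd_zsmul, hk, ofAdd_toAdd]⟩

theorem exists_translation_zpow_inl_zero_eq_iff (hx : ∀ a : A, a ∈ AddSubgroup.zmultiples x)
    {v : A ⊕ Unit} :
    (∃ k : ℤ, (translation s (.ofAdd x) ^ k) (Sum.inl 0) = v) ↔ ∃ a, Sum.inl a = v := by
  rw [exists_translation_zpow_iff hx (fun f => f (Sum.inl 0) = v)]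
  simp [Multiplicative.exists]

theorem exists_map_translation_zpow_rimEdge_zero_eq_iff
    (hx : ∀ a : A, a ∈ AddSubgroup.zmultiples x) :
    (∃ k : ℤ, Sym2.map ⇑(translation s (.ofAdd x) ^ k) (rimEdge s 0) = e) ↔
      ∃ a, rimEdge s a = e := by
  rw [exists_translation_zpow_iff hx (fun f => Sym2.map f (rimEdge s 0) = e)]
  simp [Multiplicative.exists]

theorem exists_map_translation_zpow_spoke_zero_eq_iff
    (hx : ∀ a : A, a ∈ AddSubgroup.zmultiples x) :
    (∃ k : ℤ, Sym2.map ⇑(translation s (.ofAdd x) ^ k) (spoke 0) = e) ↔ ∃ a, spoke a = e := by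
  rw [exists_translation_zpow_iff hx (fun f => Sym2.map f (spoke 0) = e)]
  simp [Multiplicative.exists]

theorem encard_edge_orbit (hs : 2 • s ≠ 0) (hx : ∀ a : A, a ∈ AddSubgroup.zmultiples x)
    (he : e ∈ (cayleyCone s).edgeSet) :
    {e' | ∃ k : ℤ, Sym2.map ⇑(translation s (.ofAdd x) ^ k) e = e'}.encard = ENat.card A := by
  have orbit_eq_range : {e' | ∃ k : ℤ, Sym2.map ⇑(translation s (.ofAdd x) ^ k) e = e'} =
      Set.range fun y => Sym2.map (translation s y) e :=
    Set.ext fun e' => exists_translation_zpow_iff hx (fun f => Sym2.map f e = e')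
  rw [orbit_eq_range, ← Set.image_univ, (map_translation_injective hs he).encard_image,
    Set.encard_univ]
  exact ENat.card_congr Multiplicative.toAdd

end cayleyCone

theorem starCycles_eq_cayleyCone (r n : ℕ) :
    starCycles r n = cayleyCone (r : ZMod (r * n)) := rfl

theorem nsmul_natCast_zmod_mul_eq_zero_iff {r : ℕ} (hr : 0 < r) (n k : ℕ) :
    k • (r : ZMod (r * n)) = 0 ↔ n ∣ k := by
  rw [nsmul_eq_mul, ← Nat.cast_mul, ZMod.natCast_eq_zero_iff, mul_comm k,
    Nat.mul_dvd_mul_iff_left hr]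

theorem two_nsmul_natCast_zmod_mul_ne_zero {n r : ℕ} (hr : 0 < r) (hn : 2 < n) :
    2 • (r : ZMod (r * n)) ≠ 0 :=
  (nsmul_natCast_zmod_mul_eq_zero_iff hr n 2).not.mpr (Nat.not_dvd_of_pos_of_lt two_pos hn)

theorem mem_zmultiples_one_zmod {N : ℕ} (a : ZMod N) : a ∈ AddSubgroup.zmultiples (1 : ZMod N) := by
  simpa [AddSubgroup.mem_zmultiples_iff] using ZMod.intCast_surjective a

open cayleyCone in
theorem stmt14_general {A : Type*} [AddCommGroup A] {s x : A} (hs : 2 • s ≠ 0)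
    (hx : ∀ a : A, a ∈ AddSubgroup.zmultiples x) :
    (cayleyCone s).Connected ∧
    (∃ g : cayleyCone s ≃g cayleyCone s,
      (∀ a : A, g (Sum.inl a) = Sum.inl (a + x)) ∧
      g (Sum.inr ()) = Sum.inr () ∧
      orderOf g = Nat.card A ∧
      (∃ v₁ v₂ : A ⊕ Unit, ¬ (∃ k : ℤ, (g ^ k) v₁ = v₂) ∧
        ∀ v : A ⊕ Unit, (∃ k : ℤ, (g ^ k) v₁ = v) ∨ (∃ k : ℤ, (g ^ k) v₂ = v)) ∧
      (∀ k : ℤ, ∀ e ∈ (cayleyCone s).edgeSet, Sym2.map ⇑(g ^ k) e = e → g ^ k = 1) ∧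
      (∃ e₁ ∈ (cayleyCone s).edgeSet, ∃ e₂ ∈ (cayleyCone s).edgeSet,
        ¬ (∃ k : ℤ, Sym2.map ⇑(g ^ k) e₁ = e₂) ∧
        ∀ e ∈ (cayleyCone s).edgeSet,
          (∃ k : ℤ, Sym2.map ⇑(g ^ k) e₁ = e) ∨ (∃ k : ℤ, Sym2.map ⇑(g ^ k) e₂ = e)) ∧
      (∀ e ∈ (cayleyCone s).edgeSet,
        {e' : Sym2 (A ⊕ Unit) | ∃ k : ℤ, Sym2.map ⇑(g ^ k) e = e'}.encard = ENat.card A)) := by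
  have hs₀ : s ≠ 0 := right_ne_zero_of_smul hs
  refine ⟨connected s, translation s (.ofAdd x), fun _ => rfl, rfl, orderOf_translation hx s,
    ⟨Sum.inl 0, Sum.inr (), ?_, ?_⟩, ?_,
    ⟨rimEdge s 0, (mem_edgeSet_iff hs₀).mpr (.inl ⟨0, rfl⟩),
      spoke 0, (mem_edgeSet_iff hs₀).mpr (.inr ⟨0, rfl⟩), ?_, ?_⟩,
    fun _ => encard_edge_orbit hs hx⟩
  · simp [exists_translation_zpow_inl_zero_eq_iff hx]
  · rintro (a | _)
    · exact .inl ((exists_translation_zpow_inl_zero_eq_iff hx).mpr ⟨a, rfl⟩)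
    · exact .inr ⟨0, rfl⟩
  · intro k e he hk
    rw [← map_zpow] at hk ⊢
    rw [eq_one_of_map_translation_eq hs he hk, map_one]
  · simp [exists_map_translation_zpow_rimEdge_zero_eq_iff hx, rimEdge_ne_spoke]
  · intro e he
    rwa [exists_map_translation_zpow_rimEdge_zero_eq_iff hx,
      exists_map_translation_zpow_spoke_zero_eq_iff hx, ← mem_edgeSet_iff hs₀]

theorem stmt14 (n r : ℕ) (hn : 3 ≤ n) (hr : 1 ≤ r) :
    (starCycles r n).Connected ∧
    (∃ g : starCycles r n ≃g starCycles r n,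
      (∀ k : ZMod (r * n), g (Sum.inl k) = Sum.inl (k + 1)) ∧
      g (Sum.inr ()) = Sum.inr () ∧
      orderOf g = r * n ∧
      -- exactly two orbits on the vertex set
      (∃ v₁ v₂ : ZMod (r * n) ⊕ Unit, ¬ (∃ k : ℤ, (g ^ k) v₁ = v₂) ∧
        ∀ v : ZMod (r * n) ⊕ Unit,
          (∃ k : ℤ, (g ^ k) v₁ = v) ∨ (∃ k : ℤ, (g ^ k) v₂ = v)) ∧
      -- `⟨g⟩` acts freely on the edge set
      (∀ k : ℤ, ∀ e ∈ (starCycles r n).edgeSet, Sym2.map ⇑(g ^ k) e = e → g ^ k = 1) ∧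
      -- with exactly two orbits
      (∃ e₁ ∈ (starCycles r n).edgeSet, ∃ e₂ ∈ (starCycles r n).edgeSet,
        ¬ (∃ k : ℤ, Sym2.map ⇑(g ^ k) e₁ = e₂) ∧
        ∀ e ∈ (starCycles r n).edgeSet,
          (∃ k : ℤ, Sym2.map ⇑(g ^ k) e₁ = e) ∨ (∃ k : ℤ, Sym2.map ⇑(g ^ k) e₂ = e)) ∧
      -- each edge orbit has size `r * n`
      (∀ e ∈ (starCycles r n).edgeSet,
        {e' : Sym2 (ZMod (r * n) ⊕ Unit) | ∃ k : ℤ, Sym2.map ⇑(g ^ k) e = e'}.ncard = r * n)) := by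
  rw [starCycles_eq_cayleyCone]
  obtain ⟨hconn, g, hinl, hinr, hord, hvert, hfree, hedge, hsize⟩ :=
    stmt14_general (two_nsmul_natCast_zmod_mul_ne_zero hr hn) mem_zmultiples_one_zmod
  exact ⟨hconn, g, hinl, hinr, hord.trans (Nat.card_zmod _), hvert, hfree, hedge,
    fun e he => (congrArg ENat.toNat (hsize e he)).trans (Nat.card_zmod _)⟩
end

section
/- Let s, r, r' ≥ 1 with Nat.gcd r r' = 1, and let Γ be the simple graph on (ZMod r) ⊕ (ZMod (s·r·r')) ⊕ (ZMod r') in which a vertex i in the first summand is adjacent to a vertex v in the second summand if and only if the image of v under the natural ring homomorphism ZMod (s·r·r') → ZMod r equals i, a vertex i' in the third summand is adjacent to a vertex v in the second summand if and only if the image of v under the natural ring homomorphism ZMod (s·r·r') → ZMod r' equals i', and there are no other adjacencies. Then Γ is connected, the map g adding 1 in each summand is an automorphism of Γ of order s·r·r', and the cyclic group generated by g has exactly three orbits on the vertex set (the three summands) and acts freely on the edge set of Γ with exactly two orbits, each of size s·r·r'. -/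
/-- The graph `r·(K_{sr',1}-stars) + r'·(K_{sr,1}-stars)` on
`ZMod r ⊕ ZMod (s*r*r') ⊕ ZMod r'`: a vertex `i` of the first summand is adjacent to a
vertex `v` of the second summand iff `v ≡ i (mod r)`, and a vertex `i'` of the third
summand is adjacent to `v` iff `v ≡ i' (mod r')`; there are no other adjacencies. -/
def triOrbitGraph (s r r' : ℕ) : SimpleGraph (ZMod r ⊕ ZMod (s * r * r') ⊕ ZMod r') :=
  SimpleGraph.fromRel (fun x y =>
    (∃ (i : ZMod r) (v : ZMod (s * r * r')),
      x = Sum.inl i ∧ y = Sum.inr (Sum.inl v) ∧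
        ZMod.castHom (⟨s * r', by ring⟩ : r ∣ s * r * r') (ZMod r) v = i) ∨
    (∃ (i' : ZMod r') (v : ZMod (s * r * r')),
      x = Sum.inr (Sum.inr i') ∧ y = Sum.inr (Sum.inl v) ∧
        ZMod.castHom (⟨s * r, by ring⟩ : r' ∣ s * r * r') (ZMod r') v = i'))

/-!
Every edge contains exactly one vertex `v` of the middle summand, and its other end is the residue
of `v` in an outer summand. So `ZMod (s * r * r')` parametrises the edges towards the first summand
as well as those towards the third, and in both parametrisations, as on the middle summand itself,
the automorphism acts as `v ↦ v + 1`; the translations of `ZMod (s * r * r')` are simply transitive.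
The graph is connected because, by the Chinese remainder theorem, any vertex of the first summand
and any vertex of the third have a common neighbour.
-/

theorem zpow_smul_eq_apply_add_intCast {G A X : Type*} [Group G] [MulAction G X]
    [AddGroupWithOne A] {g : G} {φ : A → X} (h : ∀ a, g • φ a = φ (a + 1)) (k : ℤ) (a : A) :
    g ^ k • φ a = φ (a + k) := by
  induction k with
  | zero => simp
  | succ n ih =>
    rw [← mul_self_zpow, mul_smul, ih, h, Int.cast_add, Int.cast_one, add_assoc]
  | pred n ih =>
    rw [← smul_left_cancel_iff g, ← mul_smul, mul_self_zpow, sub_add_cancel, ih, h, Int.cast_sub,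
      Int.cast_one, add_assoc, sub_add_cancel]

theorem add_intCast_surjective {n : ℕ} (a : ZMod n) :
    Function.Surjective fun k : ℤ ↦ a + (k : ZMod n) :=
  (Equiv.addLeft a).surjective.comp ZMod.intCast_surjective

theorem exists_castHom_eq_and_castHom_eq {m n N : ℕ} (hmn : m.Coprime n) (hm : m ∣ N) (hn : n ∣ N)
    (i : ZMod m) (j : ZMod n) :
    ∃ v : ZMod N, ZMod.castHom hm (ZMod m) v = i ∧ ZMod.castHom hn (ZMod n) v = j := by
  let residues : ZMod N →+* ZMod m × ZMod n :=
    (ZMod.chineseRemainder hmn : ZMod (m * n) →+* ZMod m × ZMod n).comp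
      (ZMod.castHom (hmn.mul_dvd_of_dvd_of_dvd hm hn) (ZMod (m * n)))
  have residues_surjective : Function.Surjective residues :=
    (ZMod.chineseRemainder hmn).surjective.comp (ZMod.castHom_surjective _)
  obtain ⟨v, hv⟩ := residues_surjective (i, j)
  refine ⟨v, ?_, ?_⟩
  · rw [Subsingleton.elim (ZMod.castHom hm _) ((RingHom.fst _ _).comp residues),
      RingHom.comp_apply, hv, RingHom.coe_fst]
  · rw [Subsingleton.elim (ZMod.castHom hn _) ((RingHom.snd _ _).comp residues),
      RingHom.comp_apply, hv, RingHom.coe_snd]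

namespace triOrbitGraph

variable (s r r' : ℕ)

/-- The vertex type of `triOrbitGraph s r r'`; its three summands are called left, middle and
right. -/
abbrev Vertex : Type := ZMod r ⊕ ZMod (s * r * r') ⊕ ZMod r'

/-- Reduction modulo `r`, which sends a middle vertex to its left neighbour. -/
abbrev leftResidue : ZMod (s * r * r') →+* ZMod r :=
  ZMod.castHom (⟨s * r', by ring⟩ : r ∣ s * r * r') (ZMod r)

/-- Reduction modulo `r'`, which sends a middle vertex to its right neighbour. -/
abbrev rightResidue : ZMod (s * r * r') →+* ZMod r' :=
  ZMod.castHom (⟨s * r, by ring⟩ : r' ∣ s * r * r') (ZMod r')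

variable {s r r'}

/-- The edge joining the middle vertex `v` to its left neighbour. -/
def leftEdge (v : ZMod (s * r * r')) : Sym2 (Vertex s r r') :=
  s(.inl (leftResidue s r r' v), .inr (.inl v))

/-- The edge joining the middle vertex `v` to its right neighbour. -/
def rightEdge (v : ZMod (s * r * r')) : Sym2 (Vertex s r r') :=
  s(.inr (.inr (rightResidue s r r' v)), .inr (.inl v))

theorem leftEdge_injective :
    Function.Injective (leftEdge : ZMod (s * r * r') → Sym2 (Vertex s r r')) :=
  fun v w h ↦ by simp_all [leftEdge]

theorem rightEdge_injective :
    Function.Injective (rightEdge : ZMod (s * r * r') → Sym2 (Vertex s r r')) :=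
  fun v w h ↦ by simp_all [rightEdge]

theorem leftEdge_ne_rightEdge (v w : ZMod (s * r * r')) : leftEdge v ≠ rightEdge w := by
  simp [leftEdge, rightEdge]

theorem edgeSet_eq_range_union_range :
    (triOrbitGraph s r r').edgeSet = Set.range leftEdge ∪ Set.range rightEdge := by
  ext ⟨x, y⟩
  rcases x with i | v | j <;> rcases y with i' | v' | j' <;>
    simp [triOrbitGraph, leftEdge, rightEdge, eq_comm]

theorem adj_leftResidue (v : ZMod (s * r * r')) :
    (triOrbitGraph s r r').Adj (.inl (leftResidue s r r' v)) (.inr (.inl v)) :=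
  edgeSet_eq_range_union_range.ge (.inl ⟨v, rfl⟩)

theorem adj_rightResidue (v : ZMod (s * r * r')) :
    (triOrbitGraph s r r').Adj (.inr (.inr (rightResidue s r r' v))) (.inr (.inl v)) :=
  edgeSet_eq_range_union_range.ge (.inr ⟨v, rfl⟩)

theorem reachable_left_right (h : r.Coprime r') (i : ZMod r) (j : ZMod r') :
    (triOrbitGraph s r r').Reachable (.inl i) (.inr (.inr j)) := by
  obtain ⟨v, rfl, rfl⟩ := exists_castHom_eq_and_castHom_eq (N := s * r * r') h
    ⟨s * r', by ring⟩ ⟨s * r, by ring⟩ i j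
  exact (adj_leftResidue v).reachable.trans (adj_rightResidue v).reachable.symm

theorem connected (h : r.Coprime r') : (triOrbitGraph s r r').Connected := by
  rw [SimpleGraph.connected_iff_exists_forall_reachable]
  have reachable_left (i : ZMod r) : (triOrbitGraph s r r').Reachable (.inl 0) (.inl i) :=
    (reachable_left_right h 0 0).trans (reachable_left_right h i 0).symm
  refine ⟨.inl 0, ?_⟩
  rintro (i | v | j)
  · exact reachable_left i
  · exact (reachable_left _).trans (adj_leftResidue v).reachable
  · exact reachable_left_right h 0 j

variable (s r r') in
/-- The automorphism of `triOrbitGraph s r r'` adding `1` in each summand. -/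
def shift : triOrbitGraph s r r' ≃g triOrbitGraph s r r' where
  toEquiv := (Equiv.addRight 1).sumCongr ((Equiv.addRight 1).sumCongr (Equiv.addRight 1))
  map_rel_iff' {x y} := by
    -- `castHom` has to stay folded for `map_add` to commute the residues with the shift.
    rcases x with i | v | j <;> rcases y with i' | v' | j' <;>
      simp [triOrbitGraph, -ZMod.castHom_apply]

theorem shift_zpow_left (k : ℤ) (i : ZMod r) : (shift s r r' ^ k) (.inl i) = .inl (i + k) :=
  zpow_smul_eq_apply_add_intCast (X := Vertex s r r')
    (g := shift s r r') (φ := Sum.inl) (fun _ ↦ rfl) k i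

theorem shift_zpow_middle (k : ℤ) (v : ZMod (s * r * r')) :
    (shift s r r' ^ k) (.inr (.inl v)) = .inr (.inl (v + k)) :=
  zpow_smul_eq_apply_add_intCast (X := Vertex s r r')
    (g := shift s r r') (φ := Sum.inr ∘ Sum.inl) (fun _ ↦ rfl) k v

theorem shift_zpow_right (k : ℤ) (j : ZMod r') :
    (shift s r r' ^ k) (.inr (.inr j)) = .inr (.inr (j + k)) :=
  zpow_smul_eq_apply_add_intCast (X := Vertex s r r')
    (g := shift s r r') (φ := Sum.inr ∘ Sum.inr) (fun _ ↦ rfl) k j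

theorem map_shift_zpow_leftEdge (k : ℤ) (v : ZMod (s * r * r')) :
    Sym2.map ⇑(shift s r r' ^ k) (leftEdge v) = leftEdge (v + (k : ZMod (s * r * r'))) := by
  simp only [leftEdge, Sym2.map_mk, shift_zpow_left, shift_zpow_middle, map_add, map_intCast]

theorem map_shift_zpow_rightEdge (k : ℤ) (v : ZMod (s * r * r')) :
    Sym2.map ⇑(shift s r r' ^ k) (rightEdge v) = rightEdge (v + (k : ZMod (s * r * r'))) := by
  simp only [rightEdge, Sym2.map_mk, shift_zpow_right, shift_zpow_middle, map_add, map_intCast]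

theorem shift_zpow_eq_one_iff (k : ℤ) :
    shift s r r' ^ k = 1 ↔ (k : ZMod (s * r * r')) = 0 := by
  refine ⟨fun h ↦ ?_, fun h ↦ ?_⟩
  · simpa [h] using (shift_zpow_middle k (0 : ZMod (s * r * r'))).symm
  · have left_eq_zero : (k : ZMod r) = 0 := by
      rw [← map_intCast (leftResidue s r r') k, h, map_zero]
    have right_eq_zero : (k : ZMod r') = 0 := by
      rw [← map_intCast (rightResidue s r r') k, h, map_zero]
    ext (i | v | j)
    · simp [shift_zpow_left, left_eq_zero]
    · simp [shift_zpow_middle, h]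
    · simp [shift_zpow_right, right_eq_zero]

theorem orderOf_shift : orderOf (shift s r r') = s * r * r' :=
  Nat.dvd_right_iff_eq.mp fun m ↦ by
    rw [orderOf_dvd_iff_pow_eq_one, ← zpow_natCast, shift_zpow_eq_one_iff, Int.cast_natCast,
      ZMod.natCast_eq_zero_iff]

theorem orbit_left_eq_range (i : ZMod r) :
    {w | ∃ k : ℤ, (shift s r r' ^ k) (.inl i) = w} = Set.range Sum.inl := by
  simp only [shift_zpow_left]
  exact (add_intCast_surjective i).range_comp Sum.inl

theorem orbit_middle_eq_range (v : ZMod (s * r * r')) :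
    {w | ∃ k : ℤ, (shift s r r' ^ k) (.inr (.inl v)) = w} = Set.range (Sum.inr ∘ Sum.inl) := by
  simp only [shift_zpow_middle]
  exact (add_intCast_surjective v).range_comp (Sum.inr ∘ Sum.inl)

theorem orbit_right_eq_range (j : ZMod r') :
    {w | ∃ k : ℤ, (shift s r r' ^ k) (.inr (.inr j)) = w} = Set.range (Sum.inr ∘ Sum.inr) := by
  simp only [shift_zpow_right]
  exact (add_intCast_surjective j).range_comp (Sum.inr ∘ Sum.inr)

theorem orbit_leftEdge_eq_range (v : ZMod (s * r * r')) :
    {e | ∃ k : ℤ, Sym2.map ⇑(shift s r r' ^ k) (leftEdge v) = e} = Set.range leftEdge := by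
  simp only [map_shift_zpow_leftEdge]
  exact (add_intCast_surjective v).range_comp leftEdge

theorem orbit_rightEdge_eq_range (v : ZMod (s * r * r')) :
    {e | ∃ k : ℤ, Sym2.map ⇑(shift s r r' ^ k) (rightEdge v) = e} = Set.range rightEdge := by
  simp only [map_shift_zpow_rightEdge]
  exact (add_intCast_surjective v).range_comp rightEdge

theorem shift_zpow_eq_one_of_map_eq_self {k : ℤ} {e : Sym2 (Vertex s r r')}
    (he : e ∈ (triOrbitGraph s r r').edgeSet) (hk : Sym2.map ⇑(shift s r r' ^ k) e = e) :
    shift s r r' ^ k = 1 := by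
  rw [shift_zpow_eq_one_iff]
  rw [edgeSet_eq_range_union_range] at he
  obtain ⟨v, rfl⟩ | ⟨v, rfl⟩ := he
  · rw [map_shift_zpow_leftEdge] at hk
    exact add_eq_left.mp (leftEdge_injective hk)
  · rw [map_shift_zpow_rightEdge] at hk
    exact add_eq_left.mp (rightEdge_injective hk)

theorem ncard_edge_orbit {e : Sym2 (Vertex s r r')}
    (he : e ∈ (triOrbitGraph s r r').edgeSet) :
    {e' | ∃ k : ℤ, Sym2.map ⇑(shift s r r' ^ k) e = e'}.ncard = s * r * r' := by
  rw [edgeSet_eq_range_union_range] at he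
  obtain ⟨v, rfl⟩ | ⟨v, rfl⟩ := he
  · rw [orbit_leftEdge_eq_range, Set.ncard_range_of_injective leftEdge_injective, Nat.card_zmod]
  · rw [orbit_rightEdge_eq_range, Set.ncard_range_of_injective rightEdge_injective, Nat.card_zmod]

end triOrbitGraph

theorem stmt15 (s r r' : ℕ) (hs : 1 ≤ s) (hr : 1 ≤ r) (hr' : 1 ≤ r')
    (hgcd : Nat.gcd r r' = 1) :
    (triOrbitGraph s r r').Connected ∧
    (∃ g : triOrbitGraph s r r' ≃g triOrbitGraph s r r',
      (∀ i : ZMod r, g (Sum.inl i) = Sum.inl (i + 1)) ∧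
      (∀ v : ZMod (s * r * r'), g (Sum.inr (Sum.inl v)) = Sum.inr (Sum.inl (v + 1))) ∧
      (∀ i' : ZMod r', g (Sum.inr (Sum.inr i')) = Sum.inr (Sum.inr (i' + 1))) ∧
      orderOf g = s * r * r' ∧
      -- the vertex orbits of `⟨g⟩` are exactly the three summands
      (∀ i : ZMod r,
        {w : ZMod r ⊕ ZMod (s * r * r') ⊕ ZMod r' | ∃ k : ℤ, (g ^ k) (Sum.inl i) = w} =
          Set.range Sum.inl) ∧
      (∀ v : ZMod (s * r * r'),
        {w : ZMod r ⊕ ZMod (s * r * r') ⊕ ZMod r' | ∃ k : ℤ, (g ^ k) (Sum.inr (Sum.inl v)) = w} =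
          Set.range (Sum.inr ∘ Sum.inl)) ∧
      (∀ i' : ZMod r',
        {w : ZMod r ⊕ ZMod (s * r * r') ⊕ ZMod r' | ∃ k : ℤ, (g ^ k) (Sum.inr (Sum.inr i')) = w} =
          Set.range (Sum.inr ∘ Sum.inr)) ∧
      -- `⟨g⟩` acts freely on the edge set
      (∀ k : ℤ, ∀ e ∈ (triOrbitGraph s r r').edgeSet, Sym2.map ⇑(g ^ k) e = e → g ^ k = 1) ∧
      -- with exactly two orbits
      (∃ e₁ ∈ (triOrbitGraph s r r').edgeSet, ∃ e₂ ∈ (triOrbitGraph s r r').edgeSet,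
        ¬ (∃ k : ℤ, Sym2.map ⇑(g ^ k) e₁ = e₂) ∧
        ∀ e ∈ (triOrbitGraph s r r').edgeSet,
          (∃ k : ℤ, Sym2.map ⇑(g ^ k) e₁ = e) ∨ (∃ k : ℤ, Sym2.map ⇑(g ^ k) e₂ = e)) ∧
      -- each edge orbit has size `s * r * r'`
      (∀ e ∈ (triOrbitGraph s r r').edgeSet,
        {e' : Sym2 (ZMod r ⊕ ZMod (s * r * r') ⊕ ZMod r') |
          ∃ k : ℤ, Sym2.map ⇑(g ^ k) e = e'}.ncard = s * r * r')) := by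
  open triOrbitGraph in
  refine ⟨connected hgcd, shift s r r', fun _ ↦ rfl, fun _ ↦ rfl, fun _ ↦ rfl, orderOf_shift,
    orbit_left_eq_range, orbit_middle_eq_range, orbit_right_eq_range,
    fun _ _ ↦ shift_zpow_eq_one_of_map_eq_self,
    ⟨leftEdge 0, adj_leftResidue 0, rightEdge 0, adj_rightResidue 0, ?_, fun e he ↦ ?_⟩,
    fun _ ↦ ncard_edge_orbit⟩
  · rintro ⟨k, hk⟩
    exact leftEdge_ne_rightEdge _ _ ((map_shift_zpow_leftEdge k 0).symm.trans hk)
  · exact (edgeSet_eq_range_union_range.le he).imp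
      (fun h ↦ (orbit_leftEdge_eq_range 0).ge h) (fun h ↦ (orbit_rightEdge_eq_range 0).ge h)
end

section
/- Let Γ be a finite connected simple graph with at least 3 vertices, and suppose Γ has an Eulerian circuit with edge list (e_0, …, e_{ℓ−1}) for which there exists an automorphism σ of Γ with σ(e_i) = e_{(i+2) mod ℓ} for all i. Then one of the following holds: (1) Γ is isomorphic to the cycle graph C_n for some n ≥ 3; (2) Γ is isomorphic to C_{2r}[sK_1,tK_1] for some r ≥ 2 and s, t ≥ 1 with s·t > 1 and Nat.gcd s t = 1; (3) there exist n ≥ 5 and a, b : ZMod n such that a, −a, b, −b are four pairwise distinct nonzero elements, the additive subgroup of ZMod n generated by {a, b} is all of ZMod n, and Γ is isomorphic to Circ(n,{a,−a,b,−b}). -/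
/-- The cycle graph `C_n` on `ZMod n`: `i` and `j` are adjacent iff `j = i + 1` or `i = j + 1`. -/
def cycGraph (n : ℕ) : SimpleGraph (ZMod n) :=
  SimpleGraph.fromRel (fun i j => j = i + 1)

/-- The graph `C_{2r}[sK_1, tK_1]`: vertex set `(ZMod r × ZMod s) ⊕ (ZMod r × ZMod t)`,
with `inl (k, i)` adjacent to `inr (k', j)` iff `k' = k` or `k' = k - 1`. -/
def blowupCycle (r s t : ℕ) : SimpleGraph ((ZMod r × ZMod s) ⊕ (ZMod r × ZMod t)) :=
  SimpleGraph.fromRel (fun v w => ∃ (k : ZMod r) (i : ZMod s) (k' : ZMod r) (j : ZMod t),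
    v = Sum.inl (k, i) ∧ w = Sum.inr (k', j) ∧ (k' = k ∨ k' = k - 1))

/-- The circulant graph `Circ(n, {a, -a, b, -b})` on `ZMod n`: distinct `i, j` are adjacent
iff `j - i ∈ {a, -a, b, -b}`. -/
def circGraph (n : ℕ) (a b : ZMod n) : SimpleGraph (ZMod n) :=
  SimpleGraph.fromRel (fun i j => j - i = a ∨ j - i = b)

/-!
Repeat the circuit periodically to a sequence `w : ℤ → V`. As no edge is traversed in both
directions, `σ` sends the vertex `w i` to `w (i + 2)`, and not merely the `i`-th edge to the
`(i + 2)`-nd. Hence the relation `w i = w j` is invariant under translation by `2`, so that the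
vertices at even and at odd times are coded by residues: `w (2 * k) = F k` and `w (2 * k + 1) = H k`
for injective `F : ZMod m → V` and `H : ZMod n → V`.

If the images of `F` and `H` meet, then `H k = F (k + c)` for some `c`, and `w` steps from `F x` to
`F (x + c)` and to `F (x + (1 - c))`. So `Γ` is circulant; it is a cycle if `c = 1 - c`, and all
other coincidences among the connection set would reverse an edge.

If the images are disjoint, then by the Chinese remainder theorem `F x` is adjacent to `H y` exactly
when `y = x` or `y = x - 1` modulo `g = gcd m n`. So `Γ` is `C_{2g}[(m/g) K_1, (n/g) K_1]`, which is
a cycle if `m = n`, and `g ≠ 1` because otherwise every edge would be traversed in both directions.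
-/

open Function

/-! ### Shift-invariant sequences and residue classes -/

section ShiftInvariant

variable {X : Type*} {f : ℤ → X}

/-- Translation of `ℤ` by `k` preserves the partition of `ℤ` into the fibres of `f`. This is what
remains of a symmetry `f i ↦ f (i + k)` when the map realising it is forgotten. -/
def ShiftInvariant (f : ℤ → X) (k : ℤ) : Prop :=
  ∀ i j, f (i + k) = f (j + k) ↔ f i = f j

namespace ShiftInvariant

lemma mul {k : ℤ} (hf : ShiftInvariant f k) (m : ℤ) : ShiftInvariant f (k * m) := by
  intro i j
  induction m with
  | zero => rw [mul_zero, add_zero, add_zero]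
  | succ m ih => rw [mul_add_one, ← add_assoc, ← add_assoc, hf, ih]
  | pred m ih => rw [← hf, add_assoc, add_assoc, mul_sub_one, sub_add_cancel, ih]

lemma exists_modulus (hf : ShiftInvariant f 1) :
    ∃ n : ℕ, ∀ i j : ℤ, f i = f j ↔ (i : ZMod n) = j := by
  have hshift : ∀ k, ShiftInvariant f k := fun k ↦ one_mul k ▸ hf.mul k
  let periods : AddSubgroup ℤ :=
    { carrier := {k | f k = f 0}
      zero_mem' := rfl
      add_mem' := fun {a b} ha hb ↦ by
        have hab := (hshift b a 0).2 ha
        rw [zero_add] at hab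
        exact hab.trans hb
      neg_mem' := fun {a} ha ↦ by
        rw [Set.mem_ofPred_eq, ← hshift a, neg_add_cancel, zero_add]
        exact ha.symm }
  obtain ⟨g, hg⟩ := Int.subgroup_cyclic periods
  refine ⟨g.natAbs, fun i j ↦ ?_⟩
  have hperiod : f (j - i) = f 0 ↔ j - i ∈ periods := Iff.rfl
  rw [ZMod.intCast_eq_intCast_iff_dvd_sub, Int.natAbs_dvd, eq_comm, ← hshift (-i),
    add_neg_cancel, ← sub_eq_add_neg, hperiod, hg, ← AddSubgroup.zmultiples_eq_closure,
    Int.mem_zmultiples_iff]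

lemma exists_zmod_factorization (hf : ShiftInvariant f 1) :
    ∃ (n : ℕ) (F : ZMod n → X), Injective F ∧ ∀ i : ℤ, F i = f i := by
  obtain ⟨n, hn⟩ := hf.exists_modulus
  refine ⟨n, fun x ↦ f x.cast, fun x y hxy ↦ ?_, fun i ↦ ?_⟩
  · simpa only [ZMod.intCast_zmod_cast] using (hn _ _).1 hxy
  · rw [hn, ZMod.intCast_zmod_cast]

end ShiftInvariant

end ShiftInvariant

section ZMod

lemma modulus_ne_zero_of_injective {X : Type*} [Finite X] {n : ℕ} {F : ZMod n → X}
    (hF : Injective F) : n ≠ 0 := by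
  rintro rfl
  exact not_finite_iff_infinite.2 (inferInstanceAs (Infinite ℤ)) (Finite.of_injective F hF)

lemma castHom_eq_castHom_iff_exists_intCast {m n : ℕ} (x : ZMod m) (y : ZMod n) :
    ZMod.castHom (m.gcd_dvd_left n) (ZMod (m.gcd n)) x =
        ZMod.castHom (m.gcd_dvd_right n) (ZMod (m.gcd n)) y ↔
      ∃ k : ℤ, (k : ZMod m) = x ∧ (k : ZMod n) = y := by
  constructor
  · obtain ⟨a, rfl⟩ := ZMod.intCast_surjective x
    obtain ⟨b, rfl⟩ := ZMod.intCast_surjective y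
    intro hab
    rw [map_intCast, map_intCast, ZMod.intCast_eq_intCast_iff_dvd_sub] at hab
    obtain ⟨q, hq⟩ := hab
    have bezout := Nat.gcd_eq_gcd_ab m n
    refine ⟨a + m * (m.gcdA n * q), by simp, ?_⟩
    have hk : a + m * (m.gcdA n * q) = b - n * (m.gcdB n * q) := by
      linear_combination -q * bezout - hq
    rw [hk]
    simp
  · rintro ⟨k, rfl, rfl⟩
    rw [map_intCast, map_intCast]

lemma exists_equiv_prod_castHom_eq_fst {g n : ℕ} [NeZero n] (h : g ∣ n) :
    ∃ e : ZMod g × ZMod (n / g) ≃ ZMod n, ∀ q, ZMod.castHom h (ZMod g) (e q) = q.1 := by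
  obtain ⟨s, rfl⟩ := h
  have hgs : g * s ≠ 0 := NeZero.ne _
  have : NeZero g := ⟨left_ne_zero_of_mul hgs⟩
  have : NeZero s := ⟨right_ne_zero_of_mul hgs⟩
  rw [Nat.mul_div_cancel_left s (NeZero.pos g)]
  let e (q : ZMod g × ZMod s) : ZMod (g * s) := (q.1.val + g * q.2.val : ℕ)
  have he : Surjective e := by
    intro x
    have hx : x.val / g < s := Nat.div_lt_of_lt_mul (ZMod.val_lt x)
    refine ⟨((x.val : ZMod g), ((x.val / g : ℕ) : ZMod s)), ?_⟩
    simp only [e, ZMod.val_natCast, Nat.mod_eq_of_lt hx, Nat.mod_add_div, ZMod.natCast_zmod_val]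
  have hbij : Bijective e :=
    (Fintype.bijective_iff_surjective_and_card e).2 ⟨he, by simp [ZMod.card]⟩
  exact ⟨Equiv.ofBijective e hbij, fun q ↦ by simp [e, -ZMod.castHom_apply]⟩

lemma nodup_zero_self_neg_self_neg {A : Type*} [AddCommGroup A] {a b : A} (haa : a + a ≠ 0)
    (hbb : b + b ≠ 0) (hab : a + b ≠ 0) (hne : a ≠ b) : [0, a, -a, b, -b].Nodup := by
  have ha : a ≠ 0 := fun h ↦ haa (by rw [h, add_zero])
  have hb : b ≠ 0 := fun h ↦ hbb (by rw [h, add_zero])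
  simp only [List.nodup_cons, List.mem_cons, List.not_mem_nil, or_false, not_or, List.nodup_nil,
    not_false_eq_true, and_true, eq_neg_iff_add_eq_zero, neg_add_eq_zero, neg_eq_iff_add_eq_zero,
    zero_add]
  exact ⟨⟨ha.symm, ha, hb.symm, hb⟩, ⟨haa, hne, hab⟩, ⟨hab, hne⟩, hbb⟩

lemma closure_pair_one_sub_eq_top {n : ℕ} (c : ZMod n) :
    AddSubgroup.closure {c, 1 - c} = (⊤ : AddSubgroup (ZMod n)) := by
  rw [AddSubgroup.eq_top_iff']
  intro x
  have hone : (1 : ZMod n) ∈ AddSubgroup.closure {c, 1 - c} := by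
    rw [← add_sub_cancel c 1]
    exact add_mem (AddSubgroup.subset_closure (by simp)) (AddSubgroup.subset_closure (by simp))
  obtain ⟨k, rfl⟩ := ZMod.intCast_surjective x
  simpa using zsmul_mem hone k

end ZMod

/-! ### One-way covers -/

section OneWayCover

variable {V : Type*} {Γ : SimpleGraph V} {w : ℤ → V}

lemma nonempty_iso_fromRel {X : Type*} {F : X → V} (hF : Bijective F) {r : X → X → Prop}
    (h : ∀ x y, Γ.Adj (F x) (F y) ↔ r x y ∨ r y x) :
    Nonempty (Γ ≃g SimpleGraph.fromRel r) := by
  refine ⟨RelIso.symm ⟨Equiv.ofBijective F hF, fun {x y} ↦ ?_⟩⟩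
  rw [SimpleGraph.fromRel_adj, Equiv.ofBijective_apply, Equiv.ofBijective_apply, ← h]
  exact ⟨fun hxy ↦ ⟨fun hne ↦ hxy.ne (congrArg F hne), hxy⟩, And.right⟩

/-- `Arc w x y` says that the bi-infinite vertex sequence `w` steps from `x` to `y` at some
time: these are the arcs of the digraph traced out by `w`. -/
def Arc (w : ℤ → V) (x y : V) : Prop :=
  ∃ i, w i = x ∧ w (i + 1) = y

/-- The sequence `w` visits every vertex of `Γ` and traverses every edge of `Γ`, always in the same
direction; so its arcs form an orientation of `Γ`. An Eulerian circuit, repeated periodically, is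
the motivating example, but edges may be traversed several times. -/
structure IsOneWayCover (Γ : SimpleGraph V) (w : ℤ → V) : Prop where
  surjective : Surjective w
  adj_iff : ∀ x y, Γ.Adj x y ↔ Arc w x y ∨ Arc w y x
  arc_asymm : ∀ x y, Arc w x y → ¬ Arc w y x

lemma IsOneWayCover.apply_eq_of_map_edge_eq (hw : IsOneWayCover Γ w) {σ : V → V}
    (hσ : ∀ i, s(σ (w i), σ (w (i + 1))) = s(w (i + 2), w (i + 3))) (i : ℤ) :
    σ (w i) = w (i + 2) := by
  have hprev := hσ (i - 1)
  have hnext := hσ i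
  rw [show i - 1 + 1 = i by ring, show i - 1 + 2 = i + 1 by ring,
    show i - 1 + 3 = i + 2 by ring] at hprev
  rcases Sym2.eq_iff.1 hprev with ⟨_, h⟩ | ⟨_, hback⟩
  · exact h
  rcases Sym2.eq_iff.1 hnext with ⟨h, _⟩ | ⟨hahead, _⟩
  · exact h
  -- Otherwise `σ (w i) = w (i + 1) = w (i + 3)`, so `w` runs back and forth along an edge.
  have hturn : w (i + 3) = w (i + 1) := hahead.symm.trans hback
  exact absurd ⟨i + 2, rfl, by rw [← hturn]; ring_nf⟩
    (hw.arc_asymm _ _ ⟨i + 1, rfl, by ring_nf⟩ : ¬ Arc w (w (i + 2)) (w (i + 1)))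

lemma IsOneWayCover.shiftInvariant_two [Finite V] (hw : IsOneWayCover Γ w) {σ : V → V}
    (hσ : ∀ i, s(σ (w i), σ (w (i + 1))) = s(w (i + 2), w (i + 3))) : ShiftInvariant w 2 := by
  have hσw := hw.apply_eq_of_map_edge_eq hσ
  have hσsurj : Surjective σ := by
    intro x
    obtain ⟨i, rfl⟩ := hw.surjective x
    exact ⟨w (i - 2), by rw [hσw, sub_add_cancel]⟩
  intro i j
  rw [← hσw, ← hσw, (Finite.injective_iff_surjective.2 hσsurj).eq_iff]

theorem IsOneWayCover.exists_iso_cycGraph [Finite V] (hw : IsOneWayCover Γ w)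
    (hshift : ShiftInvariant w 1) : ∃ n : ℕ, 3 ≤ n ∧ Nonempty (Γ ≃g cycGraph n) := by
  obtain ⟨n, F, hF, hFw⟩ := hshift.exists_zmod_factorization
  have hsurj : Surjective F := fun x ↦ (hw.surjective x).imp' _ fun i hi ↦ (hFw i).trans hi
  have harc : ∀ x y, Arc w (F x) (F y) ↔ y = x + 1 := by
    intro x y
    simp only [Arc, ← hFw, hF.eq_iff]
    constructor
    · rintro ⟨i, rfl, rfl⟩
      push_cast
      rfl
    · rintro rfl
      obtain ⟨i, rfl⟩ := ZMod.intCast_surjective x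
      exact ⟨i, rfl, by push_cast; rfl⟩
  have htwo : (2 : ZMod n) ≠ 0 := by
    intro h
    refine hw.arc_asymm (F 0) (F 1) ((harc _ _).2 (by ring)) ((harc _ _).2 ?_)
    rw [← h]
    norm_num
  refine ⟨n, ?_, nonempty_iso_fromRel ⟨hF, hsurj⟩ fun x y ↦ by rw [hw.adj_iff, harc, harc]⟩
  have hn : n ≠ 0 := modulus_ne_zero_of_injective hF
  by_contra! hlt
  interval_cases n
  · exact hn rfl
  · exact htwo rfl
  · exact htwo rfl

end OneWayCover

/-! ### Coding the vertices at even and at odd times by residues -/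

section ParityCoding

variable {V : Type*} {Γ : SimpleGraph V} {w : ℤ → V}

/-- `F` and `H` name the vertices which `w` visits at even and at odd times, respectively, without
repetition by residue classes. The two sets of vertices may overlap. -/
structure ParityCoding {m n : ℕ} (w : ℤ → V) (F : ZMod m → V) (H : ZMod n → V) : Prop where
  even_injective : Injective F
  odd_injective : Injective H
  even_eq : ∀ k : ℤ, w (2 * k) = F k
  odd_eq : ∀ k : ℤ, w (2 * k + 1) = H k

lemma ShiftInvariant.exists_parityCoding (hshift : ShiftInvariant w 2) :
    ∃ (m n : ℕ) (F : ZMod m → V) (H : ZMod n → V), ParityCoding w F H := by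
  have heven : ShiftInvariant (fun k ↦ w (2 * k)) 1 := fun i j ↦ by
    simp only [mul_add_one, hshift (2 * i)]
  have hodd : ShiftInvariant (fun k ↦ w (2 * k + 1)) 1 := fun i j ↦ by
    simp only [mul_add_one, add_right_comm _ (2 : ℤ) 1, hshift (2 * i + 1)]
  obtain ⟨m, F, hF, hFw⟩ := heven.exists_zmod_factorization
  obtain ⟨n, H, hH, hHw⟩ := hodd.exists_zmod_factorization
  exact ⟨m, n, F, H, hF, hH, fun k ↦ (hFw k).symm, fun k ↦ (hHw k).symm⟩

namespace ParityCoding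

section General

variable {m n : ℕ} {F : ZMod m → V} {H : ZMod n → V}

lemma forall_int (h : ParityCoding w F H) {P : V → Prop} (hF : ∀ x, P (F x)) (hH : ∀ y, P (H y))
    (i : ℤ) : P (w i) := by
  obtain ⟨k, rfl | rfl⟩ := Int.even_or_odd' i
  · exact h.even_eq k ▸ hF k
  · exact h.odd_eq k ▸ hH k

lemma odd_succ_eq (h : ParityCoding w F H) (k : ℤ) : w (2 * k + 1 + 1) = F (k + 1) := by
  rw [add_assoc, one_add_one_eq_two, ← mul_add_one, h.even_eq, Int.cast_add, Int.cast_one]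

lemma arc_iff (h : ParityCoding w F H) (u v : V) :
    Arc w u v ↔ ∃ k : ℤ, F k = u ∧ H k = v ∨ H k = u ∧ F (k + 1) = v := by
  constructor
  · rintro ⟨i, rfl, rfl⟩
    obtain ⟨k, rfl | rfl⟩ := Int.even_or_odd' i
    · exact ⟨k, .inl ⟨(h.even_eq k).symm, (h.odd_eq k).symm⟩⟩
    · exact ⟨k, .inr ⟨(h.odd_eq k).symm, (h.odd_succ_eq k).symm⟩⟩
  · rintro ⟨k, ⟨rfl, rfl⟩ | ⟨rfl, rfl⟩⟩
    · exact ⟨2 * k, h.even_eq k, h.odd_eq k⟩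
    · exact ⟨2 * k + 1, h.odd_eq k, h.odd_succ_eq k⟩

lemma exists_translate (h : ParityCoding w F H) (hshift : ShiftInvariant w 2) {x : ZMod m}
    {y : ZMod n} (hxy : F x = H y) : ∃ c : ZMod m, ParityCoding w F fun x ↦ F (x + c) := by
  obtain ⟨a, rfl⟩ := ZMod.intCast_surjective x
  obtain ⟨b, rfl⟩ := ZMod.intCast_surjective y
  refine ⟨((a - b : ℤ) : ZMod m), h.even_injective,
    h.even_injective.comp (add_left_injective _), h.even_eq, fun k ↦ ?_⟩
  have hab : w (2 * a) = w (2 * b + 1) := by rw [h.even_eq, h.odd_eq, hxy]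
  rw [← Int.cast_add, ← h.even_eq, show 2 * k + 1 = 2 * b + 1 + 2 * (k - b) by ring,
    show 2 * (k + (a - b)) = 2 * a + 2 * (k - b) by ring, hshift.mul, hab]

end General

section Translate

variable {n : ℕ} {F : ZMod n → V} {c : ZMod n}

lemma bijective_of_translate (h : ParityCoding w F fun x ↦ F (x + c)) (hw : Surjective w) :
    Bijective F := by
  refine ⟨h.even_injective, fun u ↦ ?_⟩
  obtain ⟨i, rfl⟩ := hw u
  exact h.forall_int (P := fun u ↦ ∃ x, F x = u) (fun x ↦ ⟨x, rfl⟩) (fun x ↦ ⟨x + c, rfl⟩) i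

lemma arc_translate_iff (h : ParityCoding w F fun x ↦ F (x + c)) (x y : ZMod n) :
    Arc w (F x) (F y) ↔ y - x = c ∨ y - x = 1 - c := by
  simp only [h.arc_iff, h.even_injective.eq_iff]
  constructor
  · rintro ⟨k, ⟨rfl, rfl⟩ | ⟨rfl, rfl⟩⟩
    · exact .inl (by ring)
    · exact .inr (by ring)
  · rintro (hy | hy)
    · obtain ⟨k, rfl⟩ := ZMod.intCast_surjective x
      exact ⟨k, .inl ⟨rfl, by rw [← hy]; ring⟩⟩
    · obtain ⟨k, hk⟩ := ZMod.intCast_surjective (x - c)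
      exact ⟨k, .inr ⟨by rw [hk]; ring, by rw [hk]; linear_combination -hy⟩⟩

lemma step_add_step_ne_zero (h : ParityCoding w F fun x ↦ F (x + c)) (hw : IsOneWayCover Γ w)
    {a b : ZMod n} (ha : a = c ∨ a = 1 - c) (hb : b = c ∨ b = 1 - c) : a + b ≠ 0 := by
  intro hab
  refine hw.arc_asymm (F 0) (F a) ((h.arc_translate_iff 0 a).2 (by rwa [sub_zero]))
    ((h.arc_translate_iff a 0).2 ?_)
  rwa [zero_sub, ← eq_neg_of_add_eq_zero_right hab]

lemma shiftInvariant_one_of_add_self_eq_one (h : ParityCoding w F fun x ↦ F (x + c))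
    (hc : c + c = 1) : ShiftInvariant w 1 := by
  have hwF : ∀ i, w i = F (i * c) := by
    intro i
    obtain ⟨k, rfl | rfl⟩ := Int.even_or_odd' i
    · rw [h.even_eq]
      congr 1
      push_cast
      linear_combination -k * hc
    · rw [h.odd_eq]
      congr 1
      push_cast
      linear_combination -k * hc
  intro i j
  simp only [hwF, h.even_injective.eq_iff, Int.cast_add, Int.cast_one, add_one_mul, add_left_inj]

theorem exists_iso_circGraph [Finite V] (h : ParityCoding w F fun x ↦ F (x + c))
    (hw : IsOneWayCover Γ w) (hc : c + c ≠ 1) :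
    ∃ (n : ℕ) (a b : ZMod n), 5 ≤ n ∧ a ≠ 0 ∧ b ≠ 0 ∧
      ([a, -a, b, -b] : List (ZMod n)).Nodup ∧
      AddSubgroup.closure {a, b} = (⊤ : AddSubgroup (ZMod n)) ∧
      Nonempty (Γ ≃g circGraph n a b) := by
  have : NeZero n := ⟨modulus_ne_zero_of_injective h.even_injective⟩
  have hcc : c + c ≠ 0 := h.step_add_step_ne_zero hw (.inl rfl) (.inl rfl)
  have hdd : (1 - c) + (1 - c) ≠ 0 := h.step_add_step_ne_zero hw (.inr rfl) (.inr rfl)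
  have hcd : c + (1 - c) ≠ 0 := h.step_add_step_ne_zero hw (.inl rfl) (.inr rfl)
  have hcd' : c ≠ 1 - c := fun heq ↦ hc (by linear_combination heq)
  have hdistinct := nodup_zero_self_neg_self_neg hcc hdd hcd hcd'
  have hcard : 5 ≤ n := by simpa [ZMod.card] using hdistinct.length_le_card
  obtain ⟨h0, hnodup⟩ := List.nodup_cons.1 hdistinct
  refine ⟨n, c, 1 - c, hcard, fun hc0 ↦ h0 (by simp [hc0]), fun hd0 ↦ h0 (by simp [hd0]), hnodup,
    closure_pair_one_sub_eq_top c, nonempty_iso_fromRel (h.bijective_of_translate hw.surjective) ?_⟩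
  intro x y
  rw [hw.adj_iff, h.arc_translate_iff, h.arc_translate_iff]

end Translate

section Disjoint

variable {m n : ℕ} {F : ZMod m → V} {H : ZMod n → V}

lemma arc_even_odd_iff (h : ParityCoding w F H) (hFH : ∀ x y, F x ≠ H y) (x : ZMod m)
    (y : ZMod n) :
    Arc w (F x) (H y) ↔ ZMod.castHom (m.gcd_dvd_right n) (ZMod (m.gcd n)) y =
      ZMod.castHom (m.gcd_dvd_left n) (ZMod (m.gcd n)) x := by
  rw [eq_comm, castHom_eq_castHom_iff_exists_intCast, h.arc_iff]
  simp only [h.even_injective.eq_iff, h.odd_injective.eq_iff, hFH, and_false, or_false]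

lemma arc_odd_even_iff (h : ParityCoding w F H) (hFH : ∀ x y, F x ≠ H y) (x : ZMod m)
    (y : ZMod n) :
    Arc w (H y) (F x) ↔ ZMod.castHom (m.gcd_dvd_right n) (ZMod (m.gcd n)) y =
      ZMod.castHom (m.gcd_dvd_left n) (ZMod (m.gcd n)) x - 1 := by
  rw [eq_comm, ← map_one (ZMod.castHom (m.gcd_dvd_left n) (ZMod (m.gcd n))), ← map_sub,
    castHom_eq_castHom_iff_exists_intCast, h.arc_iff]
  simp only [h.even_injective.eq_iff, h.odd_injective.eq_iff, hFH, false_and, false_or,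
    eq_sub_iff_add_eq, and_comm]

lemma not_arc_even_even (h : ParityCoding w F H) (hFH : ∀ x y, F x ≠ H y) (x x' : ZMod m) :
    ¬ Arc w (F x) (F x') := by
  simp [h.arc_iff, fun x y ↦ (hFH x y).symm]

lemma not_arc_odd_odd (h : ParityCoding w F H) (hFH : ∀ x y, F x ≠ H y) (y y' : ZMod n) :
    ¬ Arc w (H y) (H y') := by
  simp [h.arc_iff, hFH]

lemma gcd_ne_one (h : ParityCoding w F H) (hFH : ∀ x y, F x ≠ H y) (hw : IsOneWayCover Γ w) :
    m.gcd n ≠ 1 := by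
  intro hg
  have : Subsingleton (ZMod (m.gcd n)) := hg ▸ inferInstanceAs (Subsingleton (ZMod 1))
  exact hw.arc_asymm (F 0) (H 0) ((h.arc_even_odd_iff hFH 0 0).2 (Subsingleton.elim _ _))
    ((h.arc_odd_even_iff hFH 0 0).2 (Subsingleton.elim _ _))

lemma shiftInvariant_one_of_disjoint {F H : ZMod n → V} (h : ParityCoding w F H)
    (hFH : ∀ x y, F x ≠ H y) : ShiftInvariant w 1 := by
  intro i j
  obtain ⟨k, rfl | rfl⟩ := Int.even_or_odd' i <;> obtain ⟨l, rfl | rfl⟩ := Int.even_or_odd' j <;>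
    simp [h.odd_succ_eq, h.even_eq, h.odd_eq, h.even_injective.eq_iff, h.odd_injective.eq_iff, hFH,
      fun x y ↦ (hFH x y).symm]

theorem nonempty_iso_blowupCycle [NeZero m] [NeZero n] (h : ParityCoding w F H)
    (hFH : ∀ x y, F x ≠ H y) (hw : IsOneWayCover Γ w) :
    Nonempty (Γ ≃g blowupCycle (m.gcd n) (m / m.gcd n) (n / m.gcd n)) := by
  obtain ⟨e, he⟩ := exists_equiv_prod_castHom_eq_fst (m.gcd_dvd_left n)
  obtain ⟨e', he'⟩ := exists_equiv_prod_castHom_eq_fst (m.gcd_dvd_right n)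
  have hinj : Injective (Sum.elim (F ∘ e) (H ∘ e')) :=
    (h.even_injective.comp e.injective).sumElim (h.odd_injective.comp e'.injective)
      fun x y ↦ hFH (e x) (e' y)
  have hsurj : Surjective (Sum.elim (F ∘ e) (H ∘ e')) := by
    intro u
    obtain ⟨i, rfl⟩ := hw.surjective u
    refine h.forall_int (P := fun u ↦ ∃ q, Sum.elim (F ∘ e) (H ∘ e') q = u) (fun x ↦ ?_)
      (fun y ↦ ?_) i
    · exact ⟨.inl (e.symm x), by simp⟩
    · exact ⟨.inr (e'.symm y), by simp⟩
  refine nonempty_iso_fromRel ⟨hinj, hsurj⟩ ?_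
  rintro (⟨k, i⟩ | ⟨k, i⟩) (⟨k', j⟩ | ⟨k', j⟩) <;>
    simp [hw.adj_iff, h.not_arc_even_even hFH, h.not_arc_odd_odd hFH, h.arc_even_odd_iff hFH,
      h.arc_odd_even_iff hFH, he, he', or_comm]

theorem exists_iso_cycGraph_or_blowupCycle [Finite V] (h : ParityCoding w F H)
    (hFH : ∀ x y, F x ≠ H y) (hw : IsOneWayCover Γ w) :
    (∃ n : ℕ, 3 ≤ n ∧ Nonempty (Γ ≃g cycGraph n)) ∨
    (∃ r s t : ℕ, 2 ≤ r ∧ 1 ≤ s ∧ 1 ≤ t ∧ 1 < s * t ∧ Nat.gcd s t = 1 ∧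
      Nonempty (Γ ≃g blowupCycle r s t)) := by
  have : NeZero m := ⟨modulus_ne_zero_of_injective h.even_injective⟩
  have : NeZero n := ⟨modulus_ne_zero_of_injective h.odd_injective⟩
  have hgcd : 0 < m.gcd n := Nat.gcd_pos_of_pos_left n (NeZero.pos m)
  have hs : 0 < m / m.gcd n := Nat.div_pos (Nat.gcd_le_left n (NeZero.pos m)) hgcd
  have ht : 0 < n / m.gcd n := Nat.div_pos (Nat.gcd_le_right m (NeZero.pos n)) hgcd
  rcases (Nat.one_le_iff_ne_zero.2 (Nat.mul_pos hs ht).ne').eq_or_lt with hst | hst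
  · left
    have hm : m.gcd n = m := Nat.eq_of_dvd_of_div_eq_one (m.gcd_dvd_left n)
      (Nat.eq_one_of_mul_eq_one_right hst.symm)
    have hn : m.gcd n = n := Nat.eq_of_dvd_of_div_eq_one (m.gcd_dvd_right n)
      (Nat.eq_one_of_mul_eq_one_left hst.symm)
    obtain rfl : m = n := hm.symm.trans hn
    exact hw.exists_iso_cycGraph (h.shiftInvariant_one_of_disjoint hFH)
  · right
    have hgcd_ne_one := h.gcd_ne_one hFH hw
    exact ⟨_, _, _, by omega, hs, ht, hst, Nat.coprime_div_gcd_div_gcd hgcd,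
      h.nonempty_iso_blowupCycle hFH hw⟩

end Disjoint

end ParityCoding

end ParityCoding

/-! ### Closed walks -/

section ClosedWalk

variable {V : Type*} {Γ : SimpleGraph V} {v : V}

/-- The vertices of a closed walk, repeated periodically in both directions of time. -/
def cyclicVert (p : Γ.Walk v v) (i : ℤ) : V :=
  p.getVert (i % p.length).toNat

lemma getVert_eq_cyclicVert (p : Γ.Walk v v) {k : ℕ} (hk : k ≤ p.length) {i : ℤ}
    (hki : k ≡ i [ZMOD p.length]) : p.getVert k = cyclicVert p i := by
  rw [cyclicVert, ← hki, ← Int.natCast_mod, Int.toNat_natCast]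
  rcases hk.eq_or_lt with rfl | hk
  · simp
  · rw [Nat.mod_eq_of_lt hk]

lemma exists_getVert_eq_cyclicVert {p : Γ.Walk v v} (hp : 0 < p.length) (i : ℤ) :
    ∃ k < p.length, k ≡ i [ZMOD p.length] ∧ p.getVert k = cyclicVert p i ∧
      p.getVert (k + 1) = cyclicVert p (i + 1) := by
  obtain ⟨k, hk, hki⟩ := Int.existsUnique_equiv_nat i (Int.natCast_pos.2 hp)
  have hk : k < p.length := Int.ofNat_lt.1 hk
  exact ⟨k, hk, hki, getVert_eq_cyclicVert p hk.le hki,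
    getVert_eq_cyclicVert p hk (by exact_mod_cast hki.add_right 1)⟩

lemma edges_getElem_eq_cyclicVert (p : Γ.Walk v v) {k : ℕ} (hk : k < p.edges.length) {i : ℤ}
    (hki : k ≡ i [ZMOD p.length]) :
    p.edges[k] = s(cyclicVert p i, cyclicVert p (i + 1)) := by
  have hkl : k < p.length := p.length_edges ▸ hk
  rw [SimpleGraph.Walk.getElem_edges, getVert_eq_cyclicVert p hkl.le hki,
    getVert_eq_cyclicVert p hkl (by exact_mod_cast hki.add_right 1)]

lemma arc_cyclicVert_iff {p : Γ.Walk v v} (hp : 0 < p.length) {x y : V} :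
    Arc (cyclicVert p) x y ↔ ∃ hxy : Γ.Adj x y, ⟨(x, y), hxy⟩ ∈ p.darts := by
  constructor
  · rintro ⟨i, rfl, rfl⟩
    obtain ⟨k, hk, -, hfst, hsnd⟩ := exists_getVert_eq_cyclicVert hp i
    have hkd : k < p.darts.length := p.length_darts.symm ▸ hk
    have hdart := SimpleGraph.Walk.darts_getElem_eq_getVert k hkd
    simp only [← hfst, ← hsnd]
    exact ⟨p.adj_getVert_succ hk, hdart ▸ List.getElem_mem hkd⟩
  · rintro ⟨hxy, hmem⟩
    obtain ⟨k, hkd, hk⟩ := List.getElem_of_mem hmem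
    have hkl : k < p.length := p.length_darts ▸ hkd
    rw [SimpleGraph.Walk.darts_getElem_eq_getVert] at hk
    simp only [SimpleGraph.Dart.mk.injEq, Prod.mk.injEq] at hk
    refine ⟨k, ?_, ?_⟩
    · rw [← getVert_eq_cyclicVert p hkl.le rfl, hk.1]
    · rw [← Nat.cast_succ, ← getVert_eq_cyclicVert p hkl rfl, hk.2]

lemma isOneWayCover_cyclicVert [Nontrivial V] (hconn : Γ.Connected) {p : Γ.Walk v v}
    (hp : 0 < p.length) (hcover : ∀ e ∈ Γ.edgeSet, e ∈ p.edges)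
    (horient : ∀ d ∈ p.darts, d.symm ∉ p.darts) : IsOneWayCover Γ (cyclicVert p) := by
  have hadj : ∀ x y, Γ.Adj x y ↔ Arc (cyclicVert p) x y ∨ Arc (cyclicVert p) y x := by
    intro x y
    rw [arc_cyclicVert_iff hp, arc_cyclicVert_iff hp]
    refine ⟨fun hxy ↦ ?_, Or.rec Exists.fst fun h ↦ h.fst.symm⟩
    obtain ⟨d, hd, hde⟩ := List.mem_map.1 (hcover s(x, y) hxy)
    rcases (SimpleGraph.dart_edge_eq_iff d ⟨(x, y), hxy⟩).1 hde with rfl | rfl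
    · exact .inl ⟨hxy, hd⟩
    · exact .inr ⟨hxy.symm, hd⟩
  refine ⟨fun x ↦ ?_, hadj, fun x y hxy hyx ↦ ?_⟩
  · obtain ⟨y, hxy⟩ := hconn.preconnected.exists_adj_of_nontrivial x
    rcases (hadj x y).1 hxy with ⟨i, hi, -⟩ | ⟨i, -, hi⟩
    · exact ⟨i, hi⟩
    · exact ⟨i + 1, hi⟩
  · obtain ⟨_, hd⟩ := (arc_cyclicVert_iff hp).1 hxy
    obtain ⟨_, hd'⟩ := (arc_cyclicVert_iff hp).1 hyx
    exact horient _ hd hd'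

lemma map_edge_cyclicVert {p : Γ.Walk v v} (hp : 0 < p.length) {σ : V → V}
    (hσ : ∀ i : Fin p.edges.length,
      Sym2.map σ (p.edges.get i) =
        p.edges.get ⟨((i : ℕ) + 2) % p.edges.length, Nat.mod_lt _ i.pos⟩) (i : ℤ) :
    s(σ (cyclicVert p i), σ (cyclicVert p (i + 1))) =
      s(cyclicVert p (i + 2), cyclicVert p (i + 3)) := by
  obtain ⟨k, hk, hki, -⟩ := exists_getVert_eq_cyclicVert hp i
  have hke : k < p.edges.length := p.length_edges.symm ▸ hk
  have hk2 : (((k + 2) % p.edges.length : ℕ) : ℤ) ≡ i + 2 [ZMOD p.length] := by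
    rw [p.length_edges]
    push_cast
    exact (Int.mod_modEq _ _).trans (hki.add_right 2)
  have hmap := hσ ⟨k, hke⟩
  simp only [List.get_eq_getElem] at hmap
  rwa [edges_getElem_eq_cyclicVert p hke hki, edges_getElem_eq_cyclicVert p _ hk2, Sym2.map_mk,
    add_assoc] at hmap

lemma finite_of_surjective_cyclicVert {p : Γ.Walk v v} (h : Surjective (cyclicVert p)) :
    Finite V := by
  refine Set.finite_univ_iff.1 (p.support.finite_toSet.subset fun x _ ↦ ?_)
  obtain ⟨i, rfl⟩ := h x
  exact p.getVert_mem_support _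

lemma symm_notMem_darts_of_isTrail {u : V} {p : Γ.Walk u v} (hp : p.IsTrail) :
    ∀ d ∈ p.darts, d.symm ∉ p.darts := fun d hd hd' ↦
  d.symm_ne (List.inj_on_of_nodup_map hp.edges_nodup hd' hd d.edge_symm)

end ClosedWalk

theorem stmt17_general {V : Type*} [Nontrivial V] (Γ : SimpleGraph V) (hconn : Γ.Connected)
    (v : V) (p : Γ.Walk v v) (hcover : ∀ e ∈ Γ.edgeSet, e ∈ p.edges)
    (horient : ∀ d ∈ p.darts, d.symm ∉ p.darts) (σ : V → V)
    (hσ : ∀ i : Fin p.edges.length,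
      Sym2.map σ (p.edges.get i) =
        p.edges.get ⟨((i : ℕ) + 2) % p.edges.length, Nat.mod_lt _ i.pos⟩) :
    (∃ n : ℕ, 3 ≤ n ∧ Nonempty (Γ ≃g cycGraph n)) ∨
    (∃ r s t : ℕ, 2 ≤ r ∧ 1 ≤ s ∧ 1 ≤ t ∧ 1 < s * t ∧ Nat.gcd s t = 1 ∧
      Nonempty (Γ ≃g blowupCycle r s t)) ∨
    (∃ (n : ℕ) (a b : ZMod n), 5 ≤ n ∧ a ≠ 0 ∧ b ≠ 0 ∧
      ([a, -a, b, -b] : List (ZMod n)).Nodup ∧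
      AddSubgroup.closure {a, b} = (⊤ : AddSubgroup (ZMod n)) ∧
      Nonempty (Γ ≃g circGraph n a b)) := by
  have hp : 0 < p.length := by
    obtain ⟨u, hu⟩ := hconn.preconnected.exists_adj_of_nontrivial v
    exact p.length_edges ▸ List.length_pos_of_mem (hcover s(v, u) hu)
  have hw := isOneWayCover_cyclicVert hconn hp hcover horient
  have : Finite V := finite_of_surjective_cyclicVert hw.surjective
  have hshift := hw.shiftInvariant_two (map_edge_cyclicVert hp hσ)
  obtain ⟨m, n, F, H, hcoding⟩ := hshift.exists_parityCoding
  by_cases hFH : ∀ x y, F x ≠ H y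
  · rw [← or_assoc]
    exact .inl (hcoding.exists_iso_cycGraph_or_blowupCycle hFH hw)
  · push Not at hFH
    obtain ⟨x, y, hxy⟩ := hFH
    obtain ⟨c, hc⟩ := hcoding.exists_translate hshift hxy
    by_cases hcc : c + c = 1
    · exact .inl (hw.exists_iso_cycGraph (hc.shiftInvariant_one_of_add_self_eq_one hcc))
    · exact .inr (.inr (hc.exists_iso_circGraph hw hcc))

theorem stmt17 {V : Type} [Fintype V] [DecidableEq V] (Γ : SimpleGraph V)
    (hconn : Γ.Connected) (hcard : 3 ≤ Fintype.card V)
    (v : V) (p : Γ.Walk v v) (hp : p.IsEulerian)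
    (σ : Γ ≃g Γ)
    (hσ : ∀ i : Fin p.edges.length,
      Sym2.map ⇑σ (p.edges.get i) =
        p.edges.get ⟨((i : ℕ) + 2) % p.edges.length, Nat.mod_lt _ i.pos⟩) :
    (∃ n : ℕ, 3 ≤ n ∧ Nonempty (Γ ≃g cycGraph n)) ∨
    (∃ r s t : ℕ, 2 ≤ r ∧ 1 ≤ s ∧ 1 ≤ t ∧ 1 < s * t ∧ Nat.gcd s t = 1 ∧
      Nonempty (Γ ≃g blowupCycle r s t)) ∨
    (∃ (n : ℕ) (a b : ZMod n), 5 ≤ n ∧ a ≠ 0 ∧ b ≠ 0 ∧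
      ([a, -a, b, -b] : List (ZMod n)).Nodup ∧
      AddSubgroup.closure {a, b} = (⊤ : AddSubgroup (ZMod n)) ∧
      Nonempty (Γ ≃g circGraph n a b)) := by
  have : Nontrivial V := Fintype.one_lt_card_iff_nontrivial.1 (by lia)
  exact stmt17_general Γ hconn v p (fun _ ↦ hp.mem_edges_iff.2)
    (symm_notMem_darts_of_isTrail hp.isTrail) σ hσ
end

section
/- Let Γ be a finite connected simple graph with at least 3 vertices, and let g be an automorphism of Γ such that the cyclic group generated by g acts transitively on the vertex set of Γ and acts freely on the edge set of Γ with exactly two orbits. Then there exist n ≥ 5 and a, b : ZMod n such that a, −a, b, −b are four pairwise distinct nonzero elements, the additive subgroup of ZMod n generated by {a, b} is all of ZMod n, and Γ is isomorphic to Circ(n,{a,−a,b,−b}). -/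
/-!
A transitive cyclic group acting faithfully acts regularly, so `Γ` may be pulled back to a graph on
`ZMod n`, with `n` the order of `g`, on which the powers of `g` act as translations. Two pairs
`{x, y}` and `{u, v}` are translates of one another exactly when `v - u = ±(y - x)`. Hence the two
edge orbits correspond to two jumps `±a` and `±b`, which are different because the orbits are.
Translation by `a` reverses the edge `{x, x + a}` as soon as `a = -a`, so freeness excludes this.
Walks from `0` end in the subgroup generated by the jumps, so connectedness makes `a` and `b`
generate.
-/

section CyclicAction

variable {G α : Type*} [Group G] [MulAction G α] [FaithfulSMul G α] {g : G}

theorem zpow_eq_one_of_zpow_smul_eq (hg : ∀ x y : α, ∃ k : ℤ, g ^ k • x = y) {x : α} {k : ℤ}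
    (hk : g ^ k • x = x) : g ^ k = 1 := by
  refine FaithfulSMul.eq_of_smul_eq_smul (α := α) fun y => ?_
  obtain ⟨l, rfl⟩ := hg x y
  rw [smul_smul, zpow_mul_comm, mul_smul, hk, one_smul]

theorem zpow_smul_eq_zpow_smul_iff (hg : ∀ x y : α, ∃ k : ℤ, g ^ k • x = y) {x : α} {k l : ℤ} :
    g ^ k • x = g ^ l • x ↔ (k : ZMod (orderOf g)) = l := by
  rw [ZMod.intCast_eq_intCast_iff, ← zpow_eq_zpow_iff_modEq]
  refine ⟨fun h => ?_, fun h => by rw [h]⟩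
  have hfix : g ^ (-l + k) • x = x := by
    rw [zpow_add, mul_smul, h, smul_smul, ← zpow_add, neg_add_cancel, zpow_zero, one_smul]
  have hone := zpow_eq_one_of_zpow_smul_eq hg hfix
  rwa [zpow_add, zpow_neg, inv_mul_eq_one, eq_comm] at hone

theorem exists_zmod_equiv_of_transitive_zpow [Nonempty α]
    (hg : ∀ x y : α, ∃ k : ℤ, g ^ k • x = y) :
    ∃ F : ZMod (orderOf g) ≃ α, ∀ (k : ℤ) (i : ZMod (orderOf g)), F (k + i) = g ^ k • F i := by
  obtain ⟨x⟩ := ‹Nonempty α›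
  let f (i : ZMod (orderOf g)) : α := g ^ (i.cast : ℤ) • x
  have hf (k : ℤ) : f k = g ^ k • x :=
    (zpow_smul_eq_zpow_smul_iff hg).2 (ZMod.intCast_zmod_cast _)
  have hinj : f.Injective := fun i j h => by
    simpa only [ZMod.intCast_zmod_cast] using (zpow_smul_eq_zpow_smul_iff hg).1 h
  have hsurj : f.Surjective := fun y => (hg x y).imp' _ fun k hk => (hf k).trans hk
  refine ⟨.ofBijective f ⟨hinj, hsurj⟩, fun k => ZMod.forall.2 fun l => ?_⟩
  change f (k + l) = g ^ k • f l
  rw [← Int.cast_add, hf, hf, zpow_add, mul_smul]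

end CyclicAction

section Circulant

theorem closure_eq_top_of_circulantGraph_preconnected {A : Type*} [AddGroup A] {s : Set A}
    (h : (SimpleGraph.circulantGraph s).Preconnected) : AddSubgroup.closure s = ⊤ := by
  refine (AddSubgroup.eq_top_iff' _).2 fun x => ?_
  have hx := (SimpleGraph.reachable_iff_reflTransGen 0 x).1 (h 0 x)
  induction hx with
  | refl => exact zero_mem _
  | @tail y z _ hyz hy =>
    rcases hyz.2 with hs | hs
    · simpa using add_mem (neg_mem (AddSubgroup.subset_closure hs)) hy
    · simpa using add_mem (AddSubgroup.subset_closure hs) hy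

theorem circGraph_eq_circulantGraph (n : ℕ) (a b : ZMod n) :
    circGraph n a b = SimpleGraph.circulantGraph {a, b} := by
  ext i j
  simp only [circGraph, SimpleGraph.circulantGraph, SimpleGraph.fromRel_adj,
    Set.mem_insert_iff, Set.mem_singleton_iff, or_comm]

end Circulant

section Translation

variable {A : Type*} [AddCommGroup A] {G : SimpleGraph A} {x y u v : A}

theorem exists_map_add_left_eq_iff_sub_eq :
    (∃ k : A, Sym2.map (k + ·) s(x, y) = s(u, v)) ↔ v - u = y - x ∨ u - v = y - x := by
  simp only [Sym2.map_mk, Sym2.eq_iff]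
  constructor
  · rintro ⟨k, ⟨rfl, rfl⟩ | ⟨rfl, rfl⟩⟩
    · exact .inl (add_sub_add_left_eq_sub ..)
    · exact .inr (add_sub_add_left_eq_sub ..)
  · rintro (h | h)
    · exact ⟨u - x, .inl ⟨sub_add_cancel u x, by grind⟩⟩
    · exact ⟨v - x, .inr ⟨sub_add_cancel v x, by grind⟩⟩

theorem eq_circulantGraph_of_forall_mem_translates {P : Set (A × A)}
    (hinv : ∀ k : A, ∀ e ∈ G.edgeSet, Sym2.map (k + ·) e ∈ G.edgeSet)
    (hadj : ∀ p ∈ P, G.Adj p.1 p.2)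
    (hcover : ∀ e ∈ G.edgeSet, ∃ p ∈ P, ∃ k : A, Sym2.map (k + ·) s(p.1, p.2) = e) :
    G = SimpleGraph.circulantGraph ((fun p => p.2 - p.1) '' P) := by
  have horbit (i j : A) : G.Adj i j ↔ ∃ p ∈ P, ∃ k : A, Sym2.map (k + ·) s(p.1, p.2) = s(i, j) := by
    refine ⟨hcover s(i, j), ?_⟩
    rintro ⟨p, hp, k, hk⟩
    exact G.mem_edgeSet.1 (hk ▸ hinv k _ (hadj p hp))
  ext i j
  have hne : G.Adj i j → i ≠ j := SimpleGraph.Adj.ne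
  simp only [horbit, exists_map_add_left_eq_iff_sub_eq] at hne ⊢
  simp only [SimpleGraph.circulantGraph_adj, Set.mem_image]
  grind

theorem sub_ne_neg_sub_of_adj
    (hfree : ∀ k : A, ∀ e ∈ G.edgeSet, Sym2.map (k + ·) e = e → k = 0) (hxy : G.Adj x y) :
    y - x ≠ -(y - x) := by
  intro h
  have hswap : Sym2.map ((y - x) + ·) s(x, y) = s(x, y) := by
    rw [Sym2.map_mk, sub_add_cancel, h, neg_sub, sub_add_cancel, Sym2.eq_swap]
  exact hxy.ne (sub_eq_zero.1 (hfree _ _ hxy hswap)).symm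

theorem exists_eq_circulantGraph_of_two_free_orbits
    (hinv : ∀ k : A, ∀ e ∈ G.edgeSet, Sym2.map (k + ·) e ∈ G.edgeSet)
    (hfree : ∀ k : A, ∀ e ∈ G.edgeSet, Sym2.map (k + ·) e = e → k = 0)
    (horb : ∃ e₁ ∈ G.edgeSet, ∃ e₂ ∈ G.edgeSet, ¬ (∃ k : A, Sym2.map (k + ·) e₁ = e₂) ∧
      ∀ e ∈ G.edgeSet, (∃ k : A, Sym2.map (k + ·) e₁ = e) ∨ (∃ k : A, Sym2.map (k + ·) e₂ = e)) :
    ∃ a b : A, [0, a, -a, b, -b].Nodup ∧ G = SimpleGraph.circulantGraph {a, b} := by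
  obtain ⟨⟨x, y⟩, hxy, ⟨u, v⟩, huv, hne, hcover⟩ := horb
  have hcirc := eq_circulantGraph_of_forall_mem_translates (P := {(x, y), (u, v)}) hinv
    (by simpa using ⟨hxy, huv⟩) (by simpa using hcover)
  rw [Set.image_pair] at hcirc
  refine ⟨y - x, v - u, ?_, hcirc⟩
  have ha : y - x ≠ 0 := sub_ne_zero.2 hxy.ne'
  have hb : v - u ≠ 0 := sub_ne_zero.2 huv.ne'
  have ha' := sub_ne_neg_sub_of_adj hfree hxy
  have hb' := sub_ne_neg_sub_of_adj hfree huv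
  obtain ⟨hab, hab'⟩ := not_or.1 (exists_map_add_left_eq_iff_sub_eq.not.1 hne)
  rw [← neg_sub v u] at hab'
  grind

end Translation

theorem exists_comap_eq_circulantGraph {V : Type*} {Γ : SimpleGraph V} {g : Γ ≃g Γ}
    (F : ZMod (orderOf g) ≃ V) (hF : ∀ (k : ℤ) (i : ZMod (orderOf g)), F (k + i) = (g ^ k) (F i))
    (hfree : ∀ k : ℤ, ∀ e ∈ Γ.edgeSet, Sym2.map ⇑(g ^ k) e = e → g ^ k = 1)
    (horb : ∃ e₁ ∈ Γ.edgeSet, ∃ e₂ ∈ Γ.edgeSet,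
      ¬ (∃ k : ℤ, Sym2.map ⇑(g ^ k) e₁ = e₂) ∧
      ∀ e ∈ Γ.edgeSet,
        (∃ k : ℤ, Sym2.map ⇑(g ^ k) e₁ = e) ∨ (∃ k : ℤ, Sym2.map ⇑(g ^ k) e₂ = e)) :
    ∃ a b : ZMod (orderOf g), [0, a, -a, b, -b].Nodup ∧
      Γ.comap F = SimpleGraph.circulantGraph {a, b} := by
  have hmem (e : Sym2 (ZMod (orderOf g))) : Sym2.map F e ∈ Γ.edgeSet ↔ e ∈ (Γ.comap F).edgeSet :=
    (SimpleGraph.Iso.comap F Γ).map_mem_edgeSet_iff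
  have hmap (k : ℤ) (e : Sym2 (ZMod (orderOf g))) :
      Sym2.map ⇑(g ^ k) (Sym2.map F e) = Sym2.map F (Sym2.map (k + ·) e) := by
    rw [Sym2.map_map, Sym2.map_map]
    exact congrArg (Sym2.map · e) (funext fun i => (hF k i).symm)
  have hinj : Function.Injective (Sym2.map F) := Sym2.map.injective F.injective
  have hsurj : Function.Surjective (Sym2.map F) := fun e =>
    ⟨e.map F.symm, by rw [Sym2.map_map, F.self_comp_symm, Sym2.map_id, id]⟩
  apply exists_eq_circulantGraph_of_two_free_orbits
  · refine ZMod.forall.2 fun k e he => ?_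
    rw [← hmem, ← hmap]
    exact (g ^ k).map_mem_edgeSet_iff.2 ((hmem e).2 he)
  · refine ZMod.forall.2 fun k e he hk => ?_
    rw [ZMod.intCast_zmod_eq_zero_iff_dvd, orderOf_dvd_iff_zpow_eq_one]
    exact hfree k _ ((hmem e).2 he) (by rw [hmap, hk])
  · simpa only [hsurj.exists, hsurj.forall, hmem, hmap, hinj.eq_iff, ZMod.exists] using horb

-- For infinite `V` the order of `g` is `0` by convention, and `ZMod 0` is `ℤ`.
theorem stmt18_general {V : Type*} (Γ : SimpleGraph V)
    (hconn : Γ.Connected)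
    (g : Γ ≃g Γ)
    (hvtrans : ∀ v w : V, ∃ k : ℤ, (g ^ k) v = w)
    (hfree : ∀ k : ℤ, ∀ e ∈ Γ.edgeSet, Sym2.map ⇑(g ^ k) e = e → g ^ k = 1)
    (horb : ∃ e₁ ∈ Γ.edgeSet, ∃ e₂ ∈ Γ.edgeSet,
      ¬ (∃ k : ℤ, Sym2.map ⇑(g ^ k) e₁ = e₂) ∧
      ∀ e ∈ Γ.edgeSet,
        (∃ k : ℤ, Sym2.map ⇑(g ^ k) e₁ = e) ∨ (∃ k : ℤ, Sym2.map ⇑(g ^ k) e₂ = e)) :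
    ∃ a b : ZMod (orderOf g), (Finite V → 5 ≤ orderOf g) ∧ a ≠ 0 ∧ b ≠ 0 ∧
      ([a, -a, b, -b] : List (ZMod (orderOf g))).Nodup ∧
      AddSubgroup.closure {a, b} = (⊤ : AddSubgroup (ZMod (orderOf g))) ∧
      Nonempty (Γ ≃g circGraph (orderOf g) a b) := by
  have := hconn.nonempty
  obtain ⟨F, hF⟩ := exists_zmod_equiv_of_transitive_zpow (g := g) hvtrans
  obtain ⟨a, b, hnodup, hcirc⟩ := exists_comap_eq_circulantGraph F hF hfree horb
  obtain ⟨φ⟩ : Nonempty (SimpleGraph.circulantGraph {a, b} ≃g Γ) :=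
    hcirc ▸ ⟨SimpleGraph.Iso.comap F Γ⟩
  have hfive : Finite V → 5 ≤ orderOf g := fun _ => by
    have : Finite (Γ ≃g Γ) := DFunLike.finite _
    have : NeZero (orderOf g) := ⟨(orderOf_pos g).ne'⟩
    simpa only [List.length_cons, List.length_nil, ZMod.card] using hnodup.length_le_card
  have hzero : 0 ∉ [a, -a, b, -b] := (List.nodup_cons.1 hnodup).1
  have hclosure := closure_eq_top_of_circulantGraph_preconnected
    (φ.connected_iff.2 hconn).preconnected
  rw [← circGraph_eq_circulantGraph] at φ
  exact ⟨a, b, hfive, by grind, by grind, hnodup.of_cons, hclosure, ⟨φ.symm⟩⟩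

theorem stmt18 {V : Type} [Fintype V] (Γ : SimpleGraph V)
    (hconn : Γ.Connected) (hcard : 3 ≤ Fintype.card V)
    (g : Γ ≃g Γ)
    (hvtrans : ∀ v w : V, ∃ k : ℤ, (g ^ k) v = w)
    (hfree : ∀ k : ℤ, ∀ e ∈ Γ.edgeSet, Sym2.map ⇑(g ^ k) e = e → g ^ k = 1)
    (horb : ∃ e₁ ∈ Γ.edgeSet, ∃ e₂ ∈ Γ.edgeSet,
      ¬ (∃ k : ℤ, Sym2.map ⇑(g ^ k) e₁ = e₂) ∧
      ∀ e ∈ Γ.edgeSet,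
        (∃ k : ℤ, Sym2.map ⇑(g ^ k) e₁ = e) ∨ (∃ k : ℤ, Sym2.map ⇑(g ^ k) e₂ = e)) :
    ∃ (n : ℕ) (a b : ZMod n), 5 ≤ n ∧ a ≠ 0 ∧ b ≠ 0 ∧
      ([a, -a, b, -b] : List (ZMod n)).Nodup ∧
      AddSubgroup.closure {a, b} = (⊤ : AddSubgroup (ZMod n)) ∧
      Nonempty (Γ ≃g circGraph n a b) := by
  obtain ⟨a, b, hn, h⟩ := stmt18_general Γ hconn g hvtrans hfree horb
  exact ⟨orderOf g, a, b, hn inferInstance, h⟩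
end

section
/- Let r, s ≥ 1 and u ≥ 2 with s·u ≥ 3 and Nat.gcd r u = 1, and let Γ be the simple graph on (ZMod (s·r·u)) ⊕ (ZMod u) in which inl v and inl v' are adjacent if and only if v' = v + r or v = v' + r, and inl v is adjacent to inr i if and only if the image of v under the natural ring homomorphism ZMod (s·r·u) → ZMod u equals i, with no other adjacencies. Then Γ is connected, the map g with g(inl v) = inl (v+1) and g(inr i) = inr (i+1) is an automorphism of Γ of order s·r·u, and the cyclic group generated by g has exactly two orbits on the vertex set and acts freely on the edge set of Γ with exactly two orbits, each of size s·r·u. -/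
/-- The graph `r·C_{su} + u·K_{sr,1}` on `ZMod (s*r*u) ⊕ ZMod u`: `inl v` is adjacent to
`inl v'` iff `v' = v + r` or `v = v' + r`, and `inl v` is adjacent to `inr i` iff
`v ≡ i (mod u)`; there are no other adjacencies. -/
def cycleStarGraph (s r u : ℕ) : SimpleGraph (ZMod (s * r * u) ⊕ ZMod u) :=
  SimpleGraph.fromRel (fun x y =>
    (∃ v : ZMod (s * r * u), x = Sum.inl v ∧ y = Sum.inl (v + (r : ZMod (s * r * u)))) ∨
    (∃ (v : ZMod (s * r * u)) (i : ZMod u),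
      x = Sum.inl v ∧ y = Sum.inr i ∧
        ZMod.castHom (⟨s * r, by ring⟩ : u ∣ s * r * u) (ZMod u) v = i))

/-!
Write `n = s * r * u`. The group `ZMod n` acts on the graph by translation, through reduction
modulo `u` on the star centres. The cycle edges `v — v + r` and the star edges `v — v mod u` are
each parametrised by `v : ZMod n`, and translation by `a` moves the parameter `v` to `v + a`. Both
parametrisations are injective (for the cycle edges because `2 * r ≠ 0` in `ZMod n`, so no edge can
be inverted), hence the action on each family of edges is regular. The component of a vertex
`v : ZMod n` is invariant under steps by `r`, along a cycle, and by `u`, through a star centre; as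
`r` and `u` are coprime, these generate `ZMod n`.
-/

theorem ne_zero_of_add_self_ne_zero {M : Type*} [AddZeroClass M] {a : M} (h : a + a ≠ 0) :
    a ≠ 0 := by
  rintro rfl
  exact h (add_zero 0)

section ZMod

variable {n : ℕ}

theorem range_comp_add_intCast {α : Type*} (f : ZMod n → α) (v : ZMod n) :
    Set.range (fun k : ℤ ↦ f (v + k)) = Set.range f :=
  ((AddGroup.addLeft_bijective v).surjective.comp ZMod.intCast_surjective).range_comp f

theorem addSubgroup_eq_top_of_coprime {a b : ℕ} (hab : a.Coprime b) {H : AddSubgroup (ZMod n)}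
    (ha : (a : ZMod n) ∈ H) (hb : (b : ZMod n) ∈ H) : H = ⊤ := by
  obtain ⟨x, y, hxy⟩ := hab.isCoprime
  have one_mem : (1 : ZMod n) ∈ H := by
    have bezout : x • (a : ZMod n) + y • (b : ZMod n) = 1 := by
      simpa only [zsmul_eq_mul, Int.cast_add, Int.cast_mul, Int.cast_natCast, Int.cast_one] using
        congrArg (Int.cast : ℤ → ZMod n) hxy
    exact bezout ▸ H.add_mem (H.zsmul_mem ha x) (H.zsmul_mem hb y)
  refine (AddSubgroup.eq_top_iff' H).2 fun c ↦ ?_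
  obtain ⟨k, rfl⟩ := ZMod.intCast_surjective c
  exact zsmul_one (R := ZMod n) k ▸ H.zsmul_mem one_mem k

end ZMod

namespace cycleStarGraph

variable {s r u : ℕ}

variable (s r u) in
/-- Reduction modulo `u`, sending a vertex on a cycle to the centre of its star. -/
def residue : ZMod (s * r * u) →+* ZMod u :=
  ZMod.castHom ⟨s * r, by ring⟩ (ZMod u)

theorem adj_inl_inl {v w : ZMod (s * r * u)} :
    (cycleStarGraph s r u).Adj (Sum.inl v) (Sum.inl w) ↔ v ≠ w ∧ (w = v + r ∨ v = w + r) := by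
  simp [cycleStarGraph]

theorem adj_inl_inr {v : ZMod (s * r * u)} {i : ZMod u} :
    (cycleStarGraph s r u).Adj (Sum.inl v) (Sum.inr i) ↔ residue s r u v = i := by
  simp [cycleStarGraph, residue, eq_comm (a := i)]

theorem not_adj_inr_inr (i j : ZMod u) :
    ¬ (cycleStarGraph s r u).Adj (Sum.inr i) (Sum.inr j) := by
  simp [cycleStarGraph]

theorem adj_residue (v : ZMod (s * r * u)) :
    (cycleStarGraph s r u).Adj (Sum.inl v) (Sum.inr (residue s r u v)) :=
  adj_inl_inr.2 rfl

theorem reachable_add_natCast (v : ZMod (s * r * u)) :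
    (cycleStarGraph s r u).Reachable (Sum.inl v) (Sum.inl (v + r)) := by
  obtain h | h := eq_or_ne v (v + r)
  · rw [← h]
  · exact (adj_inl_inl.2 ⟨h, Or.inl rfl⟩).reachable

theorem reachable_of_residue_eq {v w : ZMod (s * r * u)}
    (h : residue s r u v = residue s r u w) :
    (cycleStarGraph s r u).Reachable (Sum.inl v) (Sum.inl w) :=
  (adj_residue v).reachable.trans (h ▸ (adj_residue w).reachable.symm)

variable (s r u) in
/-- The subgroup of those `a` for which translation by `a` maps every connected component of
`cycleStarGraph s r u` to itself. -/
def componentSubgroup : AddSubgroup (ZMod (s * r * u)) where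
  carrier := {a | ∀ v, (cycleStarGraph s r u).Reachable (Sum.inl v) (Sum.inl (v + a))}
  zero_mem' v := by rw [add_zero]
  add_mem' ha hb v := by
    rw [← add_assoc]
    exact (ha v).trans (hb _)
  neg_mem' {a} ha v := by simpa only [neg_add_cancel_right] using (ha (v + -a)).symm

theorem componentSubgroup_eq_top (h : r.Coprime u) : componentSubgroup s r u = ⊤ := by
  refine addSubgroup_eq_top_of_coprime h reachable_add_natCast fun v ↦ reachable_of_residue_eq ?_
  rw [map_add, map_natCast, ZMod.natCast_self, add_zero]

theorem connected (h : r.Coprime u) : (cycleStarGraph s r u).Connected := by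
  have reachable_inl (v : ZMod (s * r * u)) :
      (cycleStarGraph s r u).Reachable (Sum.inl 0) (Sum.inl v) := by
    have hv : v ∈ componentSubgroup s r u := componentSubgroup_eq_top h ▸ AddSubgroup.mem_top v
    simpa only [zero_add] using hv 0
  refine (SimpleGraph.connected_iff_exists_forall_reachable _).2 ⟨Sum.inl 0, ?_⟩
  rintro (v | i)
  · exact reachable_inl v
  · obtain ⟨v, rfl⟩ := ZMod.ringHom_surjective (residue s r u) i
    exact (reachable_inl v).trans (adj_residue v).reachable

/-- Translation by `a` as an automorphism of the graph; the star centres move by the residue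
of `a` modulo `u`. -/
def translate (a : ZMod (s * r * u)) : cycleStarGraph s r u ≃g cycleStarGraph s r u where
  toEquiv := (Equiv.addRight a).sumCongr (Equiv.addRight (residue s r u a))
  map_rel_iff' {x y} := by
    rcases x with v | i <;> rcases y with w | j
    · simp [adj_inl_inl, add_right_comm _ a]
    · simp [adj_inl_inr]
    · simp [SimpleGraph.adj_comm _ (Sum.inr _), adj_inl_inr]
    · simp [not_adj_inr_inr]

@[simp]
theorem translate_inl (a v : ZMod (s * r * u)) : translate a (Sum.inl v) = Sum.inl (v + a) := rfl

@[simp]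
theorem translate_inr (a : ZMod (s * r * u)) (i : ZMod u) :
    translate a (Sum.inr i) = Sum.inr (i + residue s r u a) := rfl

theorem translate_zero :
    (translate 0 : cycleStarGraph s r u ≃g cycleStarGraph s r u) = 1 := by
  ext (v | i) : 1 <;> simp

theorem translate_injective :
    Function.Injective (translate : ZMod (s * r * u) → (cycleStarGraph s r u ≃g _)) := by
  intro a b h
  simpa using DFunLike.congr_fun h (Sum.inl 0)

variable (s r u) in
/-- The action of `ZMod (s * r * u)` on the graph by translations. -/
def translateHom :
    Multiplicative (ZMod (s * r * u)) →* (cycleStarGraph s r u ≃g cycleStarGraph s r u) where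
  toFun a := translate a.toAdd
  map_one' := translate_zero
  map_mul' a b := by ext (v | i) : 1 <;> simp [add_comm, add_left_comm]

variable (s r u) in
/-- The rotation `v ↦ v + 1`, `i ↦ i + 1`. -/
def shift : cycleStarGraph s r u ≃g cycleStarGraph s r u := translate 1

theorem shift_inl (v : ZMod (s * r * u)) : shift s r u (Sum.inl v) = Sum.inl (v + 1) := rfl

theorem shift_inr (i : ZMod u) : shift s r u (Sum.inr i) = Sum.inr (i + 1) := by
  simp [shift]

theorem shift_zpow (k : ℤ) : shift s r u ^ k = translate (k : ZMod (s * r * u)) := by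
  have h := map_zpow (translateHom s r u) (Multiplicative.ofAdd 1) k
  rw [← ofAdd_zsmul, zsmul_one] at h
  exact h.symm

theorem orderOf_shift : orderOf (shift s r u) = s * r * u :=
  calc
    orderOf (shift s r u) = addOrderOf (1 : ZMod (s * r * u)) :=
      orderOf_injective (translateHom s r u) translate_injective (Multiplicative.ofAdd 1)
    _ = s * r * u := ZMod.addOrderOf_one _

theorem range_shift_zpow_inl (v : ZMod (s * r * u)) :
    Set.range (fun k : ℤ ↦ (shift s r u ^ k) (Sum.inl v)) = Set.range Sum.inl := by
  simp only [shift_zpow, translate_inl]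
  exact range_comp_add_intCast Sum.inl v

theorem range_shift_zpow_inr (i : ZMod u) :
    Set.range (fun k : ℤ ↦ (shift s r u ^ k) (Sum.inr i)) = Set.range Sum.inr := by
  simp only [shift_zpow, translate_inr, map_intCast]
  exact range_comp_add_intCast Sum.inr i

/-- The edge joining `v` to `v + r`, a loop when `r = 0` in `ZMod (s * r * u)`. -/
def cycleEdge (v : ZMod (s * r * u)) : Sym2 (ZMod (s * r * u) ⊕ ZMod u) :=
  s(Sum.inl v, Sum.inl (v + r))

/-- The edge joining `v` to the centre of its star. -/
def starEdge (v : ZMod (s * r * u)) : Sym2 (ZMod (s * r * u) ⊕ ZMod u) :=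
  s(Sum.inl v, Sum.inr (residue s r u v))

theorem map_translate_cycleEdge (a v : ZMod (s * r * u)) :
    Sym2.map (translate a) (cycleEdge v) = cycleEdge (v + a) := by
  simp [cycleEdge, add_right_comm]

theorem map_translate_starEdge (a v : ZMod (s * r * u)) :
    Sym2.map (translate a) (starEdge v) = starEdge (v + a) := by
  simp [starEdge]

theorem starEdge_injective :
    Function.Injective (starEdge : ZMod (s * r * u) → _) := by
  intro v w h
  obtain ⟨hvw, -⟩ | ⟨h, -⟩ := Sym2.eq_iff.1 h
  · exact Sum.inl_injective hvw
  · exact absurd h Sum.inl_ne_inr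

theorem natCast_add_self_ne_zero (hr : 1 ≤ r) (hsu : 3 ≤ s * u) :
    (r : ZMod (s * r * u)) + r ≠ 0 := by
  intro h
  have dvd : s * r * u ∣ r + r := by
    rw [← ZMod.natCast_eq_zero_iff]
    exact_mod_cast h
  have lt : r + r < s * r * u :=
    calc
      r + r < r * 3 := by lia
      _ ≤ r * (s * u) := Nat.mul_le_mul_left r hsu
      _ = s * r * u := by ring
  exact Nat.not_dvd_of_pos_of_lt (by lia) lt dvd

theorem cycleEdge_injective (hr : (r : ZMod (s * r * u)) + r ≠ 0) :
    Function.Injective (cycleEdge : ZMod (s * r * u) → _) := by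
  intro v w h
  obtain ⟨hvw, -⟩ | ⟨hvw, hwv⟩ := Sym2.eq_iff.1 h
  · exact Sum.inl_injective hvw
  · have inverted : w + (r + r) = w := by
      rw [← add_assoc, ← Sum.inl_injective hvw, Sum.inl_injective hwv]
    exact absurd (add_eq_left.1 inverted) hr

theorem starEdge_ne_cycleEdge (v w : ZMod (s * r * u)) : starEdge v ≠ cycleEdge w := by
  simp [starEdge, cycleEdge]

theorem edgeSet_eq (hr : (r : ZMod (s * r * u)) ≠ 0) :
    (cycleStarGraph s r u).edgeSet = Set.range cycleEdge ∪ Set.range starEdge := by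
  ext e
  constructor
  · induction e with | _ x y
    rcases x with v | i <;> rcases y with w | j <;> intro h
    · obtain ⟨-, rfl | rfl⟩ := adj_inl_inl.1 h
      · exact Or.inl ⟨v, rfl⟩
      · exact Or.inl ⟨w, Sym2.eq_swap⟩
    · obtain rfl := adj_inl_inr.1 h
      exact Or.inr ⟨v, rfl⟩
    · obtain rfl := adj_inl_inr.1 h.symm
      exact Or.inr ⟨w, Sym2.eq_swap⟩
    · exact absurd h (not_adj_inr_inr i j)
  · rintro (⟨v, rfl⟩ | ⟨v, rfl⟩)
    · exact adj_inl_inl.2 ⟨by simpa using hr, Or.inl rfl⟩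
    · exact adj_residue v

theorem range_map_shift_zpow_cycleEdge (v : ZMod (s * r * u)) :
    Set.range (fun k : ℤ ↦ Sym2.map ⇑(shift s r u ^ k) (cycleEdge v)) = Set.range cycleEdge := by
  simp only [shift_zpow, map_translate_cycleEdge]
  exact range_comp_add_intCast cycleEdge v

theorem range_map_shift_zpow_starEdge (v : ZMod (s * r * u)) :
    Set.range (fun k : ℤ ↦ Sym2.map ⇑(shift s r u ^ k) (starEdge v)) = Set.range starEdge := by
  simp only [shift_zpow, map_translate_starEdge]
  exact range_comp_add_intCast starEdge v

theorem eq_zero_of_map_translate_eq (hr : (r : ZMod (s * r * u)) + r ≠ 0) {a : ZMod (s * r * u)}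
    {e : Sym2 (ZMod (s * r * u) ⊕ ZMod u)} (he : e ∈ (cycleStarGraph s r u).edgeSet)
    (h : Sym2.map (translate a) e = e) : a = 0 := by
  rw [edgeSet_eq (ne_zero_of_add_self_ne_zero hr)] at he
  obtain ⟨v, rfl⟩ | ⟨v, rfl⟩ := he
  · rw [map_translate_cycleEdge] at h
    exact add_eq_left.1 (cycleEdge_injective hr h)
  · rw [map_translate_starEdge] at h
    exact add_eq_left.1 (starEdge_injective h)

theorem ncard_range_map_shift_zpow (hr : (r : ZMod (s * r * u)) + r ≠ 0)
    {e : Sym2 (ZMod (s * r * u) ⊕ ZMod u)} (he : e ∈ (cycleStarGraph s r u).edgeSet) :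
    (Set.range fun k : ℤ ↦ Sym2.map ⇑(shift s r u ^ k) e).ncard = s * r * u := by
  rw [edgeSet_eq (ne_zero_of_add_self_ne_zero hr)] at he
  obtain ⟨v, rfl⟩ | ⟨v, rfl⟩ := he
  · rw [range_map_shift_zpow_cycleEdge, ← Nat.card_coe_set_eq,
      Nat.card_range_of_injective (cycleEdge_injective hr), Nat.card_zmod]
  · rw [range_map_shift_zpow_starEdge, ← Nat.card_coe_set_eq,
      Nat.card_range_of_injective starEdge_injective, Nat.card_zmod]

end cycleStarGraph

open cycleStarGraph in
theorem stmt19_general (s r u : ℕ) (hr : 1 ≤ r) (hsu : 3 ≤ s * u) (hgcd : Nat.gcd r u = 1) :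
    (cycleStarGraph s r u).Connected ∧
    (∃ g : cycleStarGraph s r u ≃g cycleStarGraph s r u,
      (∀ v : ZMod (s * r * u), g (Sum.inl v) = Sum.inl (v + 1)) ∧
      (∀ i : ZMod u, g (Sum.inr i) = Sum.inr (i + 1)) ∧
      orderOf g = s * r * u ∧
      (∃ v₁ v₂ : ZMod (s * r * u) ⊕ ZMod u, ¬ (∃ k : ℤ, (g ^ k) v₁ = v₂) ∧
        ∀ v : ZMod (s * r * u) ⊕ ZMod u,
          (∃ k : ℤ, (g ^ k) v₁ = v) ∨ (∃ k : ℤ, (g ^ k) v₂ = v)) ∧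
      (∀ k : ℤ, ∀ e ∈ (cycleStarGraph s r u).edgeSet, Sym2.map ⇑(g ^ k) e = e → g ^ k = 1) ∧
      (∃ e₁ ∈ (cycleStarGraph s r u).edgeSet, ∃ e₂ ∈ (cycleStarGraph s r u).edgeSet,
        ¬ (∃ k : ℤ, Sym2.map ⇑(g ^ k) e₁ = e₂) ∧
        ∀ e ∈ (cycleStarGraph s r u).edgeSet,
          (∃ k : ℤ, Sym2.map ⇑(g ^ k) e₁ = e) ∨ (∃ k : ℤ, Sym2.map ⇑(g ^ k) e₂ = e)) ∧
      (∀ e ∈ (cycleStarGraph s r u).edgeSet,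
        {e' : Sym2 (ZMod (s * r * u) ⊕ ZMod u) |
          ∃ k : ℤ, Sym2.map ⇑(g ^ k) e = e'}.ncard = s * r * u)) := by
  have two_r : (r : ZMod (s * r * u)) + r ≠ 0 := natCast_add_self_ne_zero hr hsu
  have edges := edgeSet_eq (ne_zero_of_add_self_ne_zero two_r)
  refine ⟨connected hgcd, shift s r u, shift_inl, shift_inr, orderOf_shift,
    ⟨Sum.inl 0, Sum.inr 0, fun h ↦ ?_, ?_⟩, fun k e he h ↦ ?_,
    ⟨cycleEdge 0, edges.superset (Or.inl ⟨0, rfl⟩), starEdge 0, edges.superset (Or.inr ⟨0, rfl⟩),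
      fun h ↦ ?_, fun e he ↦ ?_⟩,
    fun e he ↦ ncard_range_map_shift_zpow two_r he⟩
  · obtain ⟨v, hv⟩ := (range_shift_zpow_inl 0).subset h
    exact Sum.inl_ne_inr hv
  · rintro (v | i)
    · exact Or.inl ((range_shift_zpow_inl 0).superset ⟨v, rfl⟩)
    · exact Or.inr ((range_shift_zpow_inr 0).superset ⟨i, rfl⟩)
  · rw [shift_zpow] at h ⊢
    rw [eq_zero_of_map_translate_eq two_r he h, translate_zero]
  · obtain ⟨v, hv⟩ := (range_map_shift_zpow_cycleEdge 0).subset h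
    exact starEdge_ne_cycleEdge 0 v hv.symm
  · exact (edges.subset he).imp (fun h ↦ (range_map_shift_zpow_cycleEdge 0).superset h)
      (fun h ↦ (range_map_shift_zpow_starEdge 0).superset h)

theorem stmt19 (s r u : ℕ) (hs : 1 ≤ s) (hr : 1 ≤ r) (hu : 2 ≤ u) (hsu : 3 ≤ s * u)
    (hgcd : Nat.gcd r u = 1) :
    (cycleStarGraph s r u).Connected ∧
    (∃ g : cycleStarGraph s r u ≃g cycleStarGraph s r u,
      (∀ v : ZMod (s * r * u), g (Sum.inl v) = Sum.inl (v + 1)) ∧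
      (∀ i : ZMod u, g (Sum.inr i) = Sum.inr (i + 1)) ∧
      orderOf g = s * r * u ∧
      -- exactly two orbits on the vertex set
      (∃ v₁ v₂ : ZMod (s * r * u) ⊕ ZMod u, ¬ (∃ k : ℤ, (g ^ k) v₁ = v₂) ∧
        ∀ v : ZMod (s * r * u) ⊕ ZMod u,
          (∃ k : ℤ, (g ^ k) v₁ = v) ∨ (∃ k : ℤ, (g ^ k) v₂ = v)) ∧
      -- `⟨g⟩` acts freely on the edge set
      (∀ k : ℤ, ∀ e ∈ (cycleStarGraph s r u).edgeSet, Sym2.map ⇑(g ^ k) e = e → g ^ k = 1) ∧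
      -- with exactly two orbits
      (∃ e₁ ∈ (cycleStarGraph s r u).edgeSet, ∃ e₂ ∈ (cycleStarGraph s r u).edgeSet,
        ¬ (∃ k : ℤ, Sym2.map ⇑(g ^ k) e₁ = e₂) ∧
        ∀ e ∈ (cycleStarGraph s r u).edgeSet,
          (∃ k : ℤ, Sym2.map ⇑(g ^ k) e₁ = e) ∨ (∃ k : ℤ, Sym2.map ⇑(g ^ k) e₂ = e)) ∧
      -- each edge orbit has size `s * r * u`
      (∀ e ∈ (cycleStarGraph s r u).edgeSet,
        {e' : Sym2 (ZMod (s * r * u) ⊕ ZMod u) |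
          ∃ k : ℤ, Sym2.map ⇑(g ^ k) e = e'}.ncard = s * r * u)) :=
  stmt19_general s r u hr hsu hgcd
end
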